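/- Fueter–Sce theorem: Let q be odd and let f(x) = F₁(x') + ωF₂(x') ∈ GSR(Ω_D). Then Δ_x^{(q−1)/2} f is left monogenic in Ω_D and Δ_x^{(q−1)/2} f(x) = (q−1)!! (A(x') + ω B(x')), where A(x') = ((1/r)∂_r)^{(q−1)/2} F₁(x') and B(x') = (∂_r ∘ (1/r)·)^{(q−1)/2} F₂(x') (values at r = 0 understood as limits as r → 0). -/

import Mathlib

open scoped BigOperators
open Filter Topology

namespace GPSM

variable (A : Type*) [NormedAddCommGroup A] [NormedSpace ℝ A] [Mul A] [One A]

/-- `A` is a real alternative algebra with unit `1`, of finite dimension `d > 1`,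
equipped with an anti-involution `conj` (a real-linear map with `(a^c)^c = a`,
`(ab)^c = b^c a^c`, fixing the reals).  The associator is alternating (left/right
alternative laws). -/
structure IsAltStarAlg (conj : A → A) : Prop where
  finDim : FiniteDimensional ℝ A
  one_lt_finrank : 1 < Module.finrank ℝ A
  mul_add' : ∀ a b c : A, a * (b + c) = a * b + a * c
  add_mul' : ∀ a b c : A, (a + b) * c = a * c + b * c
  smul_mul' : ∀ (r : ℝ) (a b : A), (r • a) * b = r • (a * b)
  mul_smul' : ∀ (r : ℝ) (a b : A), a * (r • b) = r • (a * b)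
  one_mul' : ∀ a : A, 1 * a = a
  mul_one' : ∀ a : A, a * 1 = a
  alt_left : ∀ a b : A, a * (a * b) = a * a * b
  alt_right : ∀ a b : A, a * b * b = a * (b * b)
  conj_add : ∀ a b : A, conj (a + b) = conj a + conj b
  conj_smul : ∀ (r : ℝ) (a : A), conj (r • a) = r • conj a
  conj_conj : ∀ a : A, conj (conj a) = a
  conj_mul : ∀ a b : A, conj (a * b) = conj b * conj a
  conj_one : conj 1 = 1

/-- `v 0, v 1, …, v m` is a hypercomplex basis of the hypercomplex subspace
`M = span(v 0, …, v m)` of `A`: `v 0 = 1`, `t(v s) = 0`, `n(v s) = 1`, the `v s`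
anticommute for distinct `s, t ∈ {1,…,m}`, they are linearly independent, and
`M` is contained in the quadratic cone `Q_A`. -/
structure IsHypBasis (conj : A → A) (v : ℕ → A) (m : ℕ) : Prop where
  v_zero : v 0 = 1
  trace_zero : ∀ s, 1 ≤ s → s ≤ m → v s + conj (v s) = 0
  norm_one : ∀ s, 1 ≤ s → s ≤ m → v s * conj (v s) = 1
  anticomm : ∀ s t, 1 ≤ s → s ≤ m → 1 ≤ t → t ≤ m → s ≠ t → v s * v t = -(v t * v s)
  indep : LinearIndependent ℝ (fun i : Fin (m + 1) => v i)
  mem_cone : ∀ x ∈ Submodule.span ℝ (Set.range fun i : Fin (m + 1) => v (i : ℕ)),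
      ∃ tr nr : ℝ, x + conj x = tr • (1 : A) ∧ x * conj x = nr • (1 : A) ∧
        ((∃ r : ℝ, x = r • (1 : A)) ∨ tr ^ 2 < 4 * nr)

variable {A}

/-- Identification of `ℝ^{m+1}` with the hypercomplex subspace `M`:
`(x_0,…,x_m) ↦ Σ x_s • v s`. -/
def emb (v : ℕ → A) (m : ℕ) (x : Fin (m + 1) → ℝ) : A :=
  ∑ s : Fin (m + 1), x s • v (s : ℕ)

/-- First `p+1` coordinates of a point of `M ≅ ℝ^{m+1}`, i.e. the `x_p`-part. -/
def projP (m p : ℕ) (x : Fin (m + 1) → ℝ) : Fin (p + 1) → ℝ := fun s =>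
  if h : (s : ℕ) < m + 1 then x ⟨(s : ℕ), h⟩ else 0

/-- Inclusion `ℝ^{p+1} ⊆ ℝ^{m+1}` (remaining coordinates `0`). -/
def injP (m p : ℕ) (y : Fin (p + 1) → ℝ) : Fin (m + 1) → ℝ := fun s =>
  if h : (s : ℕ) < p + 1 then y ⟨(s : ℕ), h⟩ else 0

/-- The coordinates of `x_q` (last `q = m - p` coordinates of `x`). -/
def xqpart (m p : ℕ) (x : Fin (m + 1) → ℝ) : Fin (m + 1) → ℝ := fun s =>
  if (s : ℕ) ≤ p then 0 else x s

/-- The coordinates of `x_p` inside `ℝ^{m+1}`. -/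
def xppart (m p : ℕ) (x : Fin (m + 1) → ℝ) : Fin (m + 1) → ℝ := fun s =>
  if (s : ℕ) ≤ p then x s else 0

/-- `r = |x_q|`. -/
noncomputable def rad (m p : ℕ) (x : Fin (m + 1) → ℝ) : ℝ :=
  Real.sqrt (∑ s : Fin (m + 1), (xqpart m p x s) ^ 2)

/-- `ω = x_q / |x_q|` (coordinates), `0` when `x_q = 0`. -/
noncomputable def normq (m p : ℕ) (x : Fin (m + 1) → ℝ) : Fin (m + 1) → ℝ :=
  (rad m p x)⁻¹ • xqpart m p x

/-- The reflection `x = x_p + x_q ↦ x_⋄ = x_p - x_q`. -/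
def reflP (m p : ℕ) (x : Fin (m + 1) → ℝ) : Fin (m + 1) → ℝ := fun s =>
  if (s : ℕ) ≤ p then x s else -x s

/-- The sphere `𝕊 = {x_q ∈ span(v_{p+1},…,v_m) : x_q² = -1}`, in coordinates. -/
def Sph (v : ℕ → A) (m p : ℕ) : Set (Fin (m + 1) → ℝ) :=
  {w | (∀ s : Fin (m + 1), (s : ℕ) ≤ p → w s = 0) ∧ emb v m w * emb v m w = -1}

/-- The point `x_p + r ω` of `M ≅ ℝ^{m+1}`. -/
def pt (m p : ℕ) (w : Fin (m + 1) → ℝ) (y : Fin (p + 1) → ℝ) (r : ℝ) :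
    Fin (m + 1) → ℝ :=
  injP m p y + r • w

/-- The slice `Ω_ω ⊆ ℝ^{p+2}` of `Ω` at `ω`. -/
def sliceSet (m p : ℕ) (Ω : Set (Fin (m + 1) → ℝ)) (w : Fin (m + 1) → ℝ) :
    Set ((Fin (p + 1) → ℝ) × ℝ) := {z | pt m p w z.1 z.2 ∈ Ω}

/-- The restriction `f_ω` of `f` to the slice at `ω`, as a function on `ℝ^{p+2}`. -/
def sliceFun (m p : ℕ) (f : (Fin (m + 1) → ℝ) → A) (w : Fin (m + 1) → ℝ) :
    (Fin (p + 1) → ℝ) × ℝ → A := fun z => f (pt m p w z.1 z.2)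

/-- Partial derivative `∂_{x_s}` of a function on `ℝ^{m+1}`. -/
noncomputable def pdF (m : ℕ) (s : Fin (m + 1)) (f : (Fin (m + 1) → ℝ) → A)
    (x : Fin (m + 1) → ℝ) : A := fderiv ℝ f x (Pi.single s 1)

/-- Partial derivative `∂_{x_s}` of a function on `ℝ^{p+1}`. -/
noncomputable def pdP (p : ℕ) (s : Fin (p + 1)) (g : (Fin (p + 1) → ℝ) → A)
    (y : Fin (p + 1) → ℝ) : A := fderiv ℝ g y (Pi.single s 1)

/-- Partial derivative `∂_{x_s}` of a function on `ℝ^{p+2} = ℝ^{p+1} × ℝ`. -/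
noncomputable def pdSx (p : ℕ) (s : Fin (p + 1)) (G : (Fin (p + 1) → ℝ) × ℝ → A)
    (z : (Fin (p + 1) → ℝ) × ℝ) : A := fderiv ℝ G z (Pi.single s 1, 0)

/-- Partial derivative `∂_r` of a function on `ℝ^{p+2} = ℝ^{p+1} × ℝ`. -/
noncomputable def pdSr (p : ℕ) (G : (Fin (p + 1) → ℝ) × ℝ → A)
    (z : (Fin (p + 1) → ℝ) × ℝ) : A := fderiv ℝ G z (0, 1)

/-- Second partial derivative `∂_r²`. -/
noncomputable def pdSr2 (p : ℕ) (G : (Fin (p + 1) → ℝ) × ℝ → A)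
    (z : (Fin (p + 1) → ℝ) × ℝ) : A := pdSr p (pdSr p G) z

/-- The operator `Σ_{lo ≤ s ≤ hi} v_s ∂_{x_s}` on functions on `ℝ^{m+1}`.
`Dop v m 0 p` is `D_{x_p}`, `Dop v m (p+1) m` is `D_{x_q}`, `Dop v m 0 m` is `D_x`. -/
noncomputable def Dop (v : ℕ → A) (m lo hi : ℕ) (f : (Fin (m + 1) → ℝ) → A)
    (x : Fin (m + 1) → ℝ) : A :=
  ∑ s : Fin (m + 1), if lo ≤ (s : ℕ) ∧ (s : ℕ) ≤ hi then v (s : ℕ) * pdF m s f x else 0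

/-- The conjugate operator `∂_{x_0} - Σ_{1 ≤ s ≤ hi} v_s ∂_{x_s}` on functions on
`ℝ^{m+1}`; `Dbarop v m p` is `D̄_{x_p}`, `Dbarop v m m` is `D̄_x`. -/
noncomputable def Dbarop (v : ℕ → A) (m hi : ℕ) (f : (Fin (m + 1) → ℝ) → A)
    (x : Fin (m + 1) → ℝ) : A :=
  pdF m 0 f x -
    ∑ s : Fin (m + 1), if 1 ≤ (s : ℕ) ∧ (s : ℕ) ≤ hi then v (s : ℕ) * pdF m s f x else 0

/-- The operator `D_{x_p} = Σ_{s=0}^p v_s ∂_{x_s}` on functions on `ℝ^{p+1}`. -/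
noncomputable def DopP (v : ℕ → A) (p : ℕ) (g : (Fin (p + 1) → ℝ) → A)
    (y : Fin (p + 1) → ℝ) : A :=
  ∑ s : Fin (p + 1), v (s : ℕ) * pdP p s g y

/-- The operator `D̄_{x_p} = ∂_{x_0} - Σ_{s=1}^p v_s ∂_{x_s}` on functions on `ℝ^{p+1}`. -/
noncomputable def DbaropP (v : ℕ → A) (p : ℕ) (g : (Fin (p + 1) → ℝ) → A)
    (y : Fin (p + 1) → ℝ) : A :=
  pdP p 0 g y - ∑ s : Fin (p + 1), if 1 ≤ (s : ℕ) then v (s : ℕ) * pdP p s g y else 0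

/-- The operator `D_{x_p}` on functions on `ℝ^{p+2} = ℝ^{p+1} × ℝ`. -/
noncomputable def DopSx (v : ℕ → A) (p : ℕ) (G : (Fin (p + 1) → ℝ) × ℝ → A)
    (z : (Fin (p + 1) → ℝ) × ℝ) : A :=
  ∑ s : Fin (p + 1), v (s : ℕ) * pdSx p s G z

/-- The operator `D̄_{x_p}` on functions on `ℝ^{p+2} = ℝ^{p+1} × ℝ`. -/
noncomputable def DbaropSx (v : ℕ → A) (p : ℕ) (G : (Fin (p + 1) → ℝ) × ℝ → A)
    (z : (Fin (p + 1) → ℝ) × ℝ) : A :=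
  pdSx p 0 G z - ∑ s : Fin (p + 1), if 1 ≤ (s : ℕ) then v (s : ℕ) * pdSx p s G z else 0

/-- The Laplacian `Δ_x` on functions on `ℝ^{m+1}`. -/
noncomputable def lapF (m : ℕ) (f : (Fin (m + 1) → ℝ) → A)
    (x : Fin (m + 1) → ℝ) : A :=
  ∑ s : Fin (m + 1), pdF m s (pdF m s f) x

/-- The Laplacian `Δ_{x_p}` on functions on `ℝ^{p+1}`. -/
noncomputable def lapP (p : ℕ) (g : (Fin (p + 1) → ℝ) → A)
    (y : Fin (p + 1) → ℝ) : A :=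
  ∑ s : Fin (p + 1), pdP p s (pdP p s g) y

/-- Iterated Laplacian `Δ_x^k`. -/
noncomputable def lapIterF (m k : ℕ) (f : (Fin (m + 1) → ℝ) → A) :
    (Fin (m + 1) → ℝ) → A :=
  (fun g => lapF m g)^[k] f

/-- Iterated Laplacian `Δ_{x_p}^k`. -/
noncomputable def lapIterP (p k : ℕ) (g : (Fin (p + 1) → ℝ) → A) :
    (Fin (p + 1) → ℝ) → A :=
  (fun h => lapP p h)^[k] g

/-- The Laplacian `Δ_{x'} = Δ_{x_p} + ∂_r²` on functions on `ℝ^{p+2}`. -/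
noncomputable def lapSx (p : ℕ) (G : (Fin (p + 1) → ℝ) × ℝ → A)
    (z : (Fin (p + 1) → ℝ) × ℝ) : A :=
  (∑ s : Fin (p + 1), pdSx p s (pdSx p s G) z) + pdSr2 p G z

/-- The slice Cauchy-Riemann operator `D_ω = D_{x_p} + ω ∂_r` applied to a function
on `ℝ^{p+2}`, where `ω` is given in coordinates by `w`. -/
noncomputable def DomCR (v : ℕ → A) (m p : ℕ) (w : Fin (m + 1) → ℝ)
    (G : (Fin (p + 1) → ℝ) × ℝ → A) (z : (Fin (p + 1) → ℝ) × ℝ) : A :=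
  DopSx v p G z + emb v m w * pdSr p G z

/-- `f` is left generalized partial-slice monogenic (of type `(p, m-p)`) on `Ω`. -/
def GSM (v : ℕ → A) (m p : ℕ) (f : (Fin (m + 1) → ℝ) → A)
    (Ω : Set (Fin (m + 1) → ℝ)) : Prop :=
  ∀ w ∈ Sph v m p, ContDiffOn ℝ 1 (sliceFun m p f w) (sliceSet m p Ω w) ∧
    ∀ z ∈ sliceSet m p Ω w, DomCR v m p w (sliceFun m p f w) z = 0

/-- `Ω` is partially symmetric with respect to `ℝ^{p+1}`. -/
def PSym (v : ℕ → A) (m p : ℕ) (Ω : Set (Fin (m + 1) → ℝ)) : Prop :=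
  ∀ x ∈ Ω, ∀ w ∈ Sph v m p, xppart m p x + rad m p x • w ∈ Ω

/-- `Ω` is a slice domain: a domain meeting `ℝ^{p+1}` all of whose slices are
domains in `ℝ^{p+2}`. -/
def SliceDomain (v : ℕ → A) (m p : ℕ) (Ω : Set (Fin (m + 1) → ℝ)) : Prop :=
  IsOpen Ω ∧ IsConnected Ω ∧ (∃ x ∈ Ω, xqpart m p x = 0) ∧
    ∀ w ∈ Sph v m p, IsConnected (sliceSet m p Ω w)

/-- The reflection `(x_p, r) ↦ (x_p, -r)` of `ℝ^{p+2}`. -/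
def reflD (p : ℕ) (z : (Fin (p + 1) → ℝ) × ℝ) : (Fin (p + 1) → ℝ) × ℝ := (z.1, -z.2)

/-- The p-symmetric completion `Ω_D ⊆ M` of `D ⊆ ℝ^{p+2}`. -/
def OmegaD (v : ℕ → A) (m p : ℕ) (D : Set ((Fin (p + 1) → ℝ) × ℝ)) :
    Set (Fin (m + 1) → ℝ) :=
  {x | ∃ w ∈ Sph v m p, ∃ z ∈ D, x = pt m p w z.1 z.2}

/-- `(F₁, F₂)` satisfies the even-odd (stem function) conditions on `D`. -/
def IsStem (p : ℕ) (D : Set ((Fin (p + 1) → ℝ) × ℝ))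
    (F₁ F₂ : (Fin (p + 1) → ℝ) × ℝ → A) : Prop :=
  ∀ z ∈ D, F₁ (reflD p z) = F₁ z ∧ F₂ (reflD p z) = -F₂ z

/-- `f` is the generalized partial-slice function induced by the stem `(F₁, F₂)`:
`f(x_p + rω) = F₁(x_p, r) + ω F₂(x_p, r)`. -/
def Induced (v : ℕ → A) (m p : ℕ) (D : Set ((Fin (p + 1) → ℝ) × ℝ))
    (F₁ F₂ : (Fin (p + 1) → ℝ) × ℝ → A) (f : (Fin (m + 1) → ℝ) → A) : Prop :=
  ∀ w ∈ Sph v m p, ∀ z ∈ D, f (pt m p w z.1 z.2) = F₁ z + emb v m w * F₂ z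

/-- The generalized Cauchy-Riemann system for the stem `(F₁, F₂)` on `D`. -/
def StemCR (v : ℕ → A) (p : ℕ) (D : Set ((Fin (p + 1) → ℝ) × ℝ))
    (F₁ F₂ : (Fin (p + 1) → ℝ) × ℝ → A) : Prop :=
  ∀ z ∈ D, DopSx v p F₁ z - pdSr p F₂ z = 0 ∧ DbaropSx v p F₂ z + pdSr p F₁ z = 0

/-- `f` is generalized partial-slice regular on `Ω_D`. -/
def MemGSR (v : ℕ → A) (m p : ℕ) (D : Set ((Fin (p + 1) → ℝ) × ℝ))
    (f : (Fin (m + 1) → ℝ) → A) : Prop :=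
  ∃ F₁ F₂ : (Fin (p + 1) → ℝ) × ℝ → A, IsStem p D F₁ F₂ ∧
    ContDiffOn ℝ 1 F₁ D ∧ ContDiffOn ℝ 1 F₂ D ∧
    Induced v m p D F₁ F₂ f ∧ StemCR v p D F₁ F₂

/-- `f` is a generalized partial-slice function on `Ω`. -/
def MemGS (v : ℕ → A) (m p : ℕ) (Ω : Set (Fin (m + 1) → ℝ))
    (f : (Fin (m + 1) → ℝ) → A) : Prop :=
  ∃ F₁ F₂ : (Fin (p + 1) → ℝ) × ℝ → A,
    (∀ z : (Fin (p + 1) → ℝ) × ℝ, F₁ (reflD p z) = F₁ z ∧ F₂ (reflD p z) = -F₂ z) ∧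
    ∀ x ∈ Ω, f x = F₁ (projP m p x, rad m p x) +
      emb v m (normq m p x) * F₂ (projP m p x, rad m p x)

/-- Non-associative power: `a^n` with products taken from the right. -/
def apow (a : A) (n : ℕ) : A := (fun b => a * b)^[n] 1

/-- Partial even part `PE[f](x) = (f(x) + f(x_⋄))/2`. -/
noncomputable def PE (m p : ℕ) (f : (Fin (m + 1) → ℝ) → A)
    (x : Fin (m + 1) → ℝ) : A := (2 : ℝ)⁻¹ • (f x + f (reflP m p x))

/-- Partial odd part `PO[f](x) = (f(x) - f(x_⋄))/2`. -/
noncomputable def PO (m p : ℕ) (f : (Fin (m + 1) → ℝ) → A)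
    (x : Fin (m + 1) → ℝ) : A := (2 : ℝ)⁻¹ • (f x - f (reflP m p x))

/-- `Ω₀* = {x_p + x_q : x_p ∈ Ω₀, x_q ∈ ℝ^q}`. -/
def Omega0star (m p : ℕ) (Ω₀ : Set (Fin (p + 1) → ℝ)) : Set (Fin (m + 1) → ℝ) :=
  {x | projP m p x ∈ Ω₀}

/-- The spherical derivative `f'_s(x) = (1/2) x_q⁻¹ (f(x) - f(x_⋄))`
(using `x_q⁻¹ = -x_q/|x_q|²`). -/
noncomputable def sder (v : ℕ → A) (m p : ℕ) (f : (Fin (m + 1) → ℝ) → A)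
    (x : Fin (m + 1) → ℝ) : A :=
  -(((2 : ℝ) * rad m p x ^ 2)⁻¹) • (emb v m (xqpart m p x) * (f x - f (reflP m p x)))

/-- The spherical Dirac operator
`Γ f = -(1/2) Σ_{p+1 ≤ i,j ≤ m} v_i (v_j (L_{ij} f))`. -/
noncomputable def sphericalGamma (v : ℕ → A) (m p : ℕ) (f : (Fin (m + 1) → ℝ) → A)
    (x : Fin (m + 1) → ℝ) : A :=
  -((2 : ℝ)⁻¹) • ∑ i : Fin (m + 1), ∑ j : Fin (m + 1),
    if p < (i : ℕ) ∧ p < (j : ℕ) then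
      v (i : ℕ) * (v (j : ℕ) * (x i • pdF m j f x - x j • pdF m i f x)) else 0

/-- The slice Cauchy-Riemann operator `D_ω` applied to (the slice restriction of) a
function `f` on `M`, at the point `x` (with `ω = x_q/|x_q|`). -/
noncomputable def DomCRat (v : ℕ → A) (m p : ℕ) (f : (Fin (m + 1) → ℝ) → A)
    (x : Fin (m + 1) → ℝ) : A :=
  DomCR v m p (normq m p x) (sliceFun m p f (normq m p x)) (projP m p x, rad m p x)

/-- `f` is left monogenic on `Ω`: `f ∈ C¹` and `D_x f = 0`. -/
def Monogenic (v : ℕ → A) (m : ℕ) (f : (Fin (m + 1) → ℝ) → A)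
    (Ω : Set (Fin (m + 1) → ℝ)) : Prop :=
  ContDiffOn ℝ 1 f Ω ∧ ∀ x ∈ Ω, Dop v m 0 m f x = 0

/-- `f` is harmonic on `Ω`: `f ∈ C²` and `Δ_x f = 0`. -/
def Harmonic (m : ℕ) (f : (Fin (m + 1) → ℝ) → A)
    (Ω : Set (Fin (m + 1) → ℝ)) : Prop :=
  ContDiffOn ℝ 2 f Ω ∧ ∀ x ∈ Ω, lapF m f x = 0

/-- A family of functions converges normally (locally a summable uniform bound). -/
def NormallyConvOn {E F : Type*} [TopologicalSpace E] [NormedAddCommGroup F]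
    (u : ℕ → E → F) (s : Set E) : Prop :=
  ∀ x ∈ s, ∃ U ∈ nhds x, ∃ c : ℕ → ℝ, Summable c ∧ ∀ k : ℕ, ∀ y ∈ U, ‖u k y‖ ≤ c k

/-- The generalized partial-slice CK-extension
`CK[f₀](x) = Σ_k (r^{2k}/(2k)!)(-Δ_{x_p})^k f₀(x_p)
  + ω Σ_k (r^{2k+1}/(2k+1)!)(-Δ_{x_p})^k (D_{x_p} f₀)(x_p)`. -/
noncomputable def CKe (v : ℕ → A) (m p : ℕ) (f₀ : (Fin (p + 1) → ℝ) → A)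
    (x : Fin (m + 1) → ℝ) : A :=
  (∑' k : ℕ, (((-1 : ℝ) ^ k * rad m p x ^ (2 * k)) / (2 * k).factorial) •
      lapIterP p k f₀ (projP m p x)) +
  emb v m (normq m p x) *
    ∑' k : ℕ, (((-1 : ℝ) ^ k * rad m p x ^ (2 * k + 1)) / (2 * k + 1).factorial) •
      lapIterP p k (DopP v p f₀) (projP m p x)

/-- The coefficient `Γ(q/2)(-1)^k r^{2k} / (2^{2k} k! Γ(k + q/2))`. -/
noncomputable def hgckC (q k : ℕ) (r : ℝ) : ℝ :=
  (Real.Gamma ((q : ℝ) / 2) * (-1) ^ k * r ^ (2 * k)) /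
    (2 ^ (2 * k) * (k.factorial : ℝ) * Real.Gamma ((k : ℝ) + (q : ℝ) / 2))

/-- The coefficient `Γ(q/2)(-1)^k r^{2k} / (2^{2k+1} k! Γ(k + q/2 + 1))`. -/
noncomputable def gckC' (q k : ℕ) (r : ℝ) : ℝ :=
  (Real.Gamma ((q : ℝ) / 2) * (-1) ^ k * r ^ (2 * k)) /
    (2 ^ (2 * k + 1) * (k.factorial : ℝ) * Real.Gamma ((k : ℝ) + (q : ℝ) / 2 + 1))

/-- The coefficient `Γ(q/2 + 1)(-1)^k r^{2k} / (2^{2k} k! Γ(k + q/2 + 1))`. -/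
noncomputable def hgckC' (q k : ℕ) (r : ℝ) : ℝ :=
  (Real.Gamma ((q : ℝ) / 2 + 1) * (-1) ^ k * r ^ (2 * k)) /
    (2 ^ (2 * k) * (k.factorial : ℝ) * Real.Gamma ((k : ℝ) + (q : ℝ) / 2 + 1))

/-- The monogenic generalized CK-extension `GCK[A₀]`. -/
noncomputable def GCKe (v : ℕ → A) (m p : ℕ) (A₀ : (Fin (p + 1) → ℝ) → A)
    (x : Fin (m + 1) → ℝ) : A :=
  (∑' k : ℕ, hgckC (m - p) k (rad m p x) • lapIterP p k A₀ (projP m p x)) +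
  emb v m (xqpart m p x) *
    ∑' k : ℕ, gckC' (m - p) k (rad m p x) • lapIterP p k (DopP v p A₀) (projP m p x)

/-- The harmonic generalized CK-extension `HGCK[A₀, A₁]`. -/
noncomputable def HGCKe (v : ℕ → A) (m p : ℕ) (A₀ A₁ : (Fin (p + 1) → ℝ) → A)
    (x : Fin (m + 1) → ℝ) : A :=
  (∑' k : ℕ, hgckC (m - p) k (rad m p x) • lapIterP p k A₀ (projP m p x)) +
  emb v m (xqpart m p x) *
    ∑' k : ℕ, hgckC' (m - p) k (rad m p x) • lapIterP p k A₁ (projP m p x)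

/-- The operator `(1/r)∂_r`, extended to `r = 0` by its limit `∂_r²` (on even
functions). -/
noncomputable def T1 (p : ℕ) (G : (Fin (p + 1) → ℝ) × ℝ → A) :
    (Fin (p + 1) → ℝ) × ℝ → A := fun z =>
  if z.2 = 0 then pdSr2 p G z else (z.2)⁻¹ • pdSr p G z

/-- The operator `∂_r ∘ (1/r)`, extended to `r = 0` by its limit `(1/2)∂_r²` (on odd
functions). -/
noncomputable def T2 (p : ℕ) (G : (Fin (p + 1) → ℝ) × ℝ → A) :
    (Fin (p + 1) → ℝ) × ℝ → A := fun z =>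
  if z.2 = 0 then (2 : ℝ)⁻¹ • pdSr2 p G z
  else fderiv ℝ (fun t : ℝ => t⁻¹ • G (z.1, t)) z.2 1

/-- `C_q(k) = (q-1)(q-3)⋯(q-2k+1)`, `C_q(0) = 1`. -/
noncomputable def cq (q k : ℕ) : ℝ :=
  ∏ i ∈ Finset.range k, ((q : ℝ) - (2 * (i : ℝ) + 1))

/-- Double factorial. -/
def dfac : ℕ → ℕ
  | 0 => 1
  | 1 => 1
  | n + 2 => (n + 2) * dfac n

/-- The Fueter-Sce constant `γ_q = (-1)^{(q-1)/2} (q-1)!!/(q-2)!!`. -/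
noncomputable def gammaQ (q : ℕ) : ℝ :=
  (-1 : ℝ) ^ ((q - 1) / 2) * (dfac (q - 1) : ℝ) / (dfac (q - 2) : ℝ)


section Reg
open MeasureTheory

variable {W : Type*} [NormedAddCommGroup W] [NormedSpace ℝ W] [FiniteDimensional ℝ W]
  [MeasurableSpace W] [BorelSpace W] {V : Type*} [NormedAddCommGroup V] [NormedSpace ℝ V]
  [FiniteDimensional ℝ V]

lemma weak_symm (μ : Measure W) [μ.IsAddHaarMeasure] (η : W → ℝ) (hη : ContDiff ℝ 2 η)
    (hc : HasCompactSupport η) (U : W → V) (hU : ContDiff ℝ 1 U) (a b : W) :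
    ∫ x, fderiv ℝ η x a • fderiv ℝ U x b ∂μ = ∫ x, fderiv ℝ η x b • fderiv ℝ U x a ∂μ := by
  have hη1 : ContDiff ℝ 1 (fderiv ℝ η) := hη.fderiv_right (by norm_num)
  have hηc : ∀ c, ContDiff ℝ 1 (fun x => fderiv ℝ η x c) := fun c =>
    hη1.clm_apply contDiff_const
  have hcc : ∀ c, HasCompactSupport (fun x => fderiv ℝ η x c) := fun c =>
    hc.fderiv_apply (𝕜 := ℝ) c
  have hUc : ∀ c, Continuous (fun x => fderiv ℝ U x c) := fun c =>
    (hU.continuous_fderiv (by norm_num)).clm_apply continuous_const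
  have key : ∀ a b : W, ∫ x, fderiv ℝ η x a • fderiv ℝ U x b ∂μ =
      - ∫ x, fderiv ℝ (fun x => fderiv ℝ η x a) x b • U x ∂μ := by
    intro a b
    apply integral_smul_fderiv_eq_neg_fderiv_smul_of_integrable
    · apply Continuous.integrable_of_hasCompactSupport
      · exact (((hηc a).continuous_fderiv (by norm_num)).clm_apply continuous_const).smul
          hU.continuous
      · exact HasCompactSupport.smul_right ((hcc a).fderiv_apply (𝕜 := ℝ) b)
    · apply Continuous.integrable_of_hasCompactSupport
      · exact (hηc a).continuous.smul (hUc b)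
      · exact HasCompactSupport.smul_right (hcc a)
    · apply Continuous.integrable_of_hasCompactSupport
      · exact (hηc a).continuous.smul hU.continuous
      · exact HasCompactSupport.smul_right (hcc a)
    · exact fun x _ => ((hηc a).differentiable (by norm_num)) x
    · exact fun x _ => (hU.differentiable (by norm_num)) x
  rw [key, key]
  congr 2
  ext x
  congr 1
  have e : ∀ a b : W, fderiv ℝ (fun x => fderiv ℝ η x a) x b = fderiv ℝ (fderiv ℝ η) x b a := by
    intro a b
    rw [fderiv_clm_apply ((hη1.differentiable (by norm_num)) x) (differentiableAt_const a)]
    simp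
  rw [e, e]
  exact (hη.contDiffAt.isSymmSndFDerivAt (by simp)).eq b a

lemma weak_harm {ι : Type*} [Fintype ι] [DecidableEq ι] (μ : Measure W) [μ.IsAddHaarMeasure]
    (e : ι → W) (E E' : ι → V →L[ℝ] V)
    (hE : ∀ i j x, E' i (E j x) + E' j (E i x) = if i = j then (2 : ℝ) • x else 0)
    (η : W → ℝ) (hη : ContDiff ℝ 2 η)
    (hc : HasCompactSupport η) (U : W → V) (hU : ContDiff ℝ 1 U)
    (hD : ∀ x ∈ tsupport η, ∑ j, E j (fderiv ℝ U x (e j)) = 0) :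
    ∑ i, ∫ x, fderiv ℝ η x (e i) • fderiv ℝ U x (e i) ∂μ = 0 := by
  set S : ι → ι → V := fun i j => ∫ x, fderiv ℝ η x (e i) • fderiv ℝ U x (e j) ∂μ with hS
  have hsym : ∀ i j, S i j = S j i := fun i j => weak_symm μ η hη hc U hU _ _
  have hInt : ∀ i j, Integrable (fun x => fderiv ℝ η x (e i) • fderiv ℝ U x (e j)) μ := by
    intro i j
    apply Continuous.integrable_of_hasCompactSupport
    · exact ((hη.continuous_fderiv (by norm_num)).clm_apply continuous_const).smul
        ((hU.continuous_fderiv (by norm_num)).clm_apply continuous_const)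
    · exact HasCompactSupport.smul_right (hc.fderiv_apply (𝕜 := ℝ) _)
  have h0 : ∀ i, ∑ j, E j (S i j) = 0 := by
    intro i
    have : ∀ j, E j (S i j) = ∫ x, E j (fderiv ℝ η x (e i) • fderiv ℝ U x (e j)) ∂μ :=
      fun j => ((E j).integral_comp_comm (hInt i j)).symm
    simp_rw [this]
    rw [← integral_finset_sum _ (fun j _ => (E j).integrable_comp (hInt i j))]
    rw [← integral_zero W V (μ := μ)]
    congr 1
    ext x
    simp only [map_smul, ← Finset.smul_sum]
    by_cases hx : x ∈ tsupport η
    · rw [hD x hx, smul_zero]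
    · have : fderiv ℝ η x = 0 := by
        by_contra h
        exact hx (support_fderiv_subset ℝ h)
      simp [this]
  have h1 : ∑ i, ∑ j, E' i (E j (S i j)) = 0 := by
    apply Finset.sum_eq_zero
    intro i _
    rw [← map_sum, h0, map_zero]
  have h2 : ∑ i, ∑ j, E' j (E i (S i j)) = 0 := by
    rw [Finset.sum_comm, ← h1]
    refine Finset.sum_congr rfl fun i _ => Finset.sum_congr rfl fun j _ => ?_
    rw [hsym]
  have h3 : ∑ i, ∑ j, (E' i (E j (S i j)) + E' j (E i (S i j))) = 0 := by
    simp_rw [Finset.sum_add_distrib]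
    rw [h1, h2, add_zero]
  simp_rw [hE] at h3
  simp only [Finset.sum_ite_eq, Finset.mem_univ, if_true, ← Finset.smul_sum] at h3
  simpa using h3

end Reg


section Reg2
open MeasureTheory

lemma exists_primitive (h : ℝ → ℝ) (hh : ContDiff ℝ 1 h) (c : ℝ) (hc : ∀ s, c ≤ s → h s = 0) :
    ∃ H : ℝ → ℝ, ContDiff ℝ 2 H ∧ (∀ s, HasDerivAt H (h s) s) ∧ ∀ s, c ≤ s → H s = 0 := by
  have hd : ∀ s, HasDerivAt (fun s => ∫ t in c..s, h t) (h s) s := fun s =>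
    intervalIntegral.integral_hasDerivAt_right (hh.continuous.intervalIntegrable _ _)
      (hh.continuous.stronglyMeasurableAtFilter _ _) hh.continuous.continuousAt
  refine ⟨fun s => ∫ t in c..s, h t, ?_, hd, ?_⟩
  · have : (2 : WithTop ℕ∞) = 1 + 1 := by norm_num
    rw [this, contDiff_succ_iff_deriv]
    refine ⟨fun s => (hd s).differentiableAt, by simp, ?_⟩
    have : deriv (fun s => ∫ t in c..s, h t) = h := funext fun s => (hd s).deriv
    rw [this]; exact hh
  · intro s hs
    show ∫ t in c..s, h t = 0
    rw [intervalIntegral.integral_congr (g := fun _ => (0 : ℝ))]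
    · simp
    · intro t ht
      rw [Set.uIcc_of_le hs] at ht
      exact hc t ht.1

variable {W : Type*} [NormedAddCommGroup W] [NormedSpace ℝ W] [FiniteDimensional ℝ W]
  [MeasurableSpace W] [BorelSpace W] {V : Type*} [NormedAddCommGroup V] [NormedSpace ℝ V]
  [FiniteDimensional ℝ V] {ι : Type*} [Fintype ι] [DecidableEq ι]

/-- sum of squares of coordinates -/
noncomputable def Nq {W : Type*} [NormedAddCommGroup W] [NormedSpace ℝ W] {ι : Type*} [Fintype ι]
    (b : Module.Basis ι ℝ W) (y : W) : ℝ := ∑ i, (b.repr y i) ^ 2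

lemma Nq_contDiff (b : Module.Basis ι ℝ W) : ContDiff ℝ ⊤ (Nq b) := by
  unfold Nq
  refine ContDiff.sum fun i _ => ContDiff.pow ?_ 2
  exact (LinearMap.toContinuousLinearMap (b.coord i)).contDiff

lemma Nq_hasFDerivAt (b : Module.Basis ι ℝ W) (y : W) (i : ι) :
    fderiv ℝ (Nq b) y (b i) = 2 * b.repr y i := by
  have h : ∀ j, HasFDerivAt (fun y => (b.repr y j) ^ 2)
      ((2 * b.repr y j) • (LinearMap.toContinuousLinearMap (b.coord j))) y := by
    intro j
    have := (LinearMap.toContinuousLinearMap (b.coord j)).hasFDerivAt (x := y)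
    have := this.pow 2
    simpa using this
  have h2 : HasFDerivAt (Nq b) (∑ j, (2 * b.repr y j) • (LinearMap.toContinuousLinearMap (b.coord j))) y :=
    HasFDerivAt.fun_sum fun j _ => h j
  rw [h2.fderiv]
  simp [Finsupp.single_apply]

lemma Nq_bound (b : Module.Basis ι ℝ W) (c : ℝ) (y : W) (hy : Nq b y ≤ c) :
    ‖y‖ ≤ Real.sqrt c * ∑ i, ‖b i‖ := by
  conv_lhs => rw [← b.sum_repr y]
  refine (norm_sum_le _ _).trans ?_
  rw [Finset.mul_sum]
  refine Finset.sum_le_sum fun i _ => ?_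
  rw [norm_smul]
  refine mul_le_mul_of_nonneg_right ?_ (norm_nonneg _)
  rw [Real.norm_eq_abs]
  apply Real.abs_le_sqrt
  refine le_trans ?_ hy
  exact Finset.single_le_sum (f := fun i => (b.repr y i) ^ 2) (fun j _ => sq_nonneg _) (Finset.mem_univ i)

lemma mean_value (μ : Measure W) [μ.IsAddHaarMeasure] (b : Module.Basis ι ℝ W)
    (E E' : ι → V →L[ℝ] V)
    (hE : ∀ i j x, E' i (E j x) + E' j (E i x) = if i = j then (2 : ℝ) • x else 0)
    (U : W → V) (hU : ContDiff ℝ 1 U) (hUc : HasCompactSupport U)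
    (h : ℝ → ℝ) (hh : ContDiff ℝ 1 h) (c : ℝ) (hc : ∀ s, c ≤ s → h s = 0) (z : W)
    (hD : ∀ y, Nq b y ≤ c → ∀ δ ∈ Set.Icc (0 : ℝ) 1,
      ∑ j, E j (fderiv ℝ U (z - δ • y) (b j)) = 0) :
    (∫ y, h (Nq b y) ∂μ) • U z = ∫ y, h (Nq b y) • U (z - y) ∂μ := by
  obtain ⟨H, hH2, hHd, hH0⟩ := exists_primitive h hh c hc
  have hNc : ContDiff ℝ ⊤ (Nq b) := Nq_contDiff b
  have hNd : Differentiable ℝ (Nq b) := hNc.differentiable (by simp)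
  set φ : W → ℝ := fun y => h (Nq b y) with hφ
  have hφcont : Continuous φ := hh.continuous.comp hNc.continuous
  have hK : IsCompact {y : W | Nq b y ≤ c} := by
    apply Metric.isCompact_of_isClosed_isBounded
    · exact isClosed_le hNc.continuous continuous_const
    · refine (Metric.isBounded_closedBall (x := (0 : W)) (r := Real.sqrt c * ∑ i, ‖b i‖)).subset ?_
      intro y hy
      simpa using Nq_bound b c y hy
  have hKclosed := hK.isClosed
  have hφc : HasCompactSupport φ := by
    refine HasCompactSupport.intro hK fun y hy => hc _ ?_
    simp only [Set.mem_ofPred_eq, not_le] at hy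
    exact hy.le
  set Ψ : W → ℝ := fun y => (1/2 : ℝ) * H (Nq b y) with hΨ
  have hΨ2 : ContDiff ℝ 2 Ψ := contDiff_const.mul (hH2.comp (hNc.of_le le_top))
  have hΨ0 : ∀ y, y ∉ {y : W | Nq b y ≤ c} → Ψ y = 0 := by
    intro y hy
    simp only [Set.mem_ofPred_eq, not_le] at hy
    simp [hΨ, hH0 _ hy.le]
  have hΨc : HasCompactSupport Ψ := HasCompactSupport.intro hK hΨ0
  have hΨt : ∀ y ∈ tsupport Ψ, Nq b y ≤ c := by
    have : tsupport Ψ ⊆ {y : W | Nq b y ≤ c} := by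
      apply closure_minimal _ hKclosed
      intro y hy
      by_contra h'
      exact hy (hΨ0 y h')
    exact fun y hy => this hy
  have hΨd : ∀ y i, fderiv ℝ Ψ y (b i) = φ y * b.repr y i := by
    intro y i
    have h1 : HasFDerivAt (fun y => H (Nq b y)) (h (Nq b y) • fderiv ℝ (Nq b) y) y :=
      (hHd _).comp_hasFDerivAt y (hNd y).hasFDerivAt
    have h2 := (h1.const_mul (1/2 : ℝ)).fderiv
    rw [h2]
    simp only [smul_apply, Nq_hasFDerivAt, hφ, smul_eq_mul]
    ring
  have hdU : Continuous (fderiv ℝ U) := hU.continuous_fderiv (by norm_num)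
  obtain ⟨C, hC⟩ : ∃ C, ∀ x, ‖fderiv ℝ U x‖ ≤ C :=
    (hUc.fderiv (𝕜 := ℝ)).exists_bound_of_continuous hdU
  -- derivative
  set M : ℝ → V := fun δ => ∫ y, φ y • U (z - δ • y) ∂μ with hM
  have hMd : ∀ δ, HasDerivAt M (∫ y, φ y • fderiv ℝ U (z - δ • y) (-y) ∂μ) δ := by
    intro δ
    refine (hasDerivAt_integral_of_dominated_loc_of_deriv_le
      (F := fun δ y => φ y • U (z - δ • y))
      (F' := fun δ y => φ y • fderiv ℝ U (z - δ • y) (-y))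
      (bound := fun y => ‖φ y‖ * (C * ‖y‖)) (s := Set.univ) Filter.univ_mem ?_ ?_ ?_ ?_ ?_ ?_).2
    · refine Eventually.of_forall fun δ => Continuous.aestronglyMeasurable ?_
      exact hφcont.smul (hU.continuous.comp (by fun_prop))
    · apply Continuous.integrable_of_hasCompactSupport
      · exact hφcont.smul (hU.continuous.comp (by fun_prop))
      · exact hφc.smul_right
    · refine Continuous.aestronglyMeasurable ?_
      exact hφcont.smul ((hdU.comp (by fun_prop)).clm_apply continuous_neg)
    · refine Eventually.of_forall fun y δ _ => ?_
      rw [norm_smul]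
      refine mul_le_mul_of_nonneg_left ?_ (norm_nonneg _)
      refine (ContinuousLinearMap.le_opNorm _ _).trans ?_
      rw [norm_neg]
      exact mul_le_mul_of_nonneg_right (hC _) (norm_nonneg _)
    · apply Continuous.integrable_of_hasCompactSupport
      · exact hφcont.norm.mul (continuous_const.mul continuous_norm)
      · exact hφc.norm.mul_right
    · refine Eventually.of_forall fun y δ _ => ?_
      refine HasDerivAt.const_smul (φ y) ?_
      have h1 : HasDerivAt (fun δ : ℝ => z - δ • y) (-y) δ := by
        simpa using ((hasDerivAt_id δ).smul_const y).const_sub z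
      exact ((hU.differentiable (by norm_num)) _).hasFDerivAt.comp_hasDerivAt δ h1
  have hM0 : ∀ δ ∈ Set.Icc (0 : ℝ) 1, ∫ y, φ y • fderiv ℝ U (z - δ • y) (-y) ∂μ = 0 := by
    intro δ hδ
    by_cases hδ0 : δ = 0
    · subst hδ0
      simp only [zero_smul, sub_zero]
      set I := ∫ y, φ y • fderiv ℝ U z (-y) ∂μ with hI
      have h1 : I = - I := by
        conv_lhs => rw [hI, ← integral_neg_eq_self]
        rw [hI, ← integral_neg]
        congr 1
        ext y
        have : φ (-y) = φ y := by simp [hφ, Nq]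
        rw [this]; simp
      have h2 : (2 : ℝ) • I = 0 := by
        rw [two_smul]; nth_rewrite 1 [h1]; simp
      simpa using h2
    · set Uδ : W → V := fun y => U (z - δ • y) with hUδ
      have hUδ1 : ContDiff ℝ 1 Uδ := hU.comp (contDiff_const.sub (contDiff_const.smul contDiff_id))
      have hUδd : ∀ y w, fderiv ℝ Uδ y w = -δ • fderiv ℝ U (z - δ • y) w := by
        intro y w
        have h1 : HasFDerivAt (fun y : W => z - δ • y) (-(δ • ContinuousLinearMap.id ℝ W)) y :=
          ((hasFDerivAt_id y).const_smul δ).const_sub z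
        have h2 := ((hU.differentiable (by norm_num)) (z - δ • y)).hasFDerivAt.comp y h1
        have h3 : fderiv ℝ Uδ y = _ := h2.fderiv
        rw [h3]; simp
      have hw := weak_harm μ (fun i => b i) E E' hE Ψ hΨ2 hΨc Uδ hUδ1 (by
        intro y hy
        simp only [hUδd, map_smul, ← Finset.smul_sum]
        rw [hD y (hΨt y hy) δ hδ, smul_zero])
      rw [← integral_finsetSum] at hw
      · have : ∀ y, ∑ i, fderiv ℝ Ψ y (b i) • fderiv ℝ Uδ y (b i) =
            δ • (φ y • fderiv ℝ U (z - δ • y) (-y)) := by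
          intro y
          have hy : fderiv ℝ U (z - δ • y) (-y) =
              -∑ i, b.repr y i • fderiv ℝ U (z - δ • y) (b i) := by
            rw [map_neg]
            conv_lhs => enter [1, 2]; rw [← b.sum_repr y]
            rw [map_sum]
            simp only [map_smul]
          rw [hy]
          simp only [hUδd, hΨd, smul_neg, Finset.smul_sum, neg_smul, Finset.sum_neg_distrib]
          congr 1
          refine Finset.sum_congr rfl fun i _ => ?_
          simp only [smul_smul]
          congr 1
          ring
        simp_rw [this] at hw
        rw [integral_smul] at hw
        exact (smul_eq_zero.mp hw).resolve_left hδ0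
      · intro i _
        apply Continuous.integrable_of_hasCompactSupport
        · exact ((hΨ2.continuous_fderiv (by norm_num)).clm_apply continuous_const).smul
            ((hUδ1.continuous_fderiv (by norm_num)).clm_apply continuous_const)
        · exact HasCompactSupport.smul_right (hΨc.fderiv_apply (𝕜 := ℝ) _)
  have hconst : M 1 = M 0 := by
    refine constant_of_has_deriv_right_zero (f := M) (a := 0) (b := 1)
      (fun δ _ => (hMd δ).continuousAt.continuousWithinAt) (fun δ hδ => ?_) 1 (by simp)
    have := hMd δ
    rw [hM0 δ ⟨hδ.1, hδ.2.le⟩] at this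
    exact this.hasDerivWithinAt
  have e1 : M 1 = ∫ y, φ y • U (z - y) ∂μ := by simp [hM]
  have e0 : M 0 = (∫ y, φ y ∂μ) • U z := by
    simp only [hM, zero_smul, sub_zero]
    exact integral_smul_const _ _
  rw [← e0, ← e1, hconst]

end Reg2


section Reg3
open MeasureTheory
open scoped ContDiff

variable {W : Type*} [NormedAddCommGroup W] [NormedSpace ℝ W] [FiniteDimensional ℝ W]
  {V : Type*} [NormedAddCommGroup V] [NormedSpace ℝ V]
  [FiniteDimensional ℝ V] {ι : Type*} [Fintype ι] [DecidableEq ι]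

lemma contDiff_of_tsupp {W V : Type*} [NormedAddCommGroup W] [NormedSpace ℝ W]
    [NormedAddCommGroup V] [NormedSpace ℝ V] {n : WithTop ℕ∞} {f : W → V}
    (h : ∀ x ∈ tsupport f, ContDiffAt ℝ n f x) : ContDiff ℝ n f := by
  rw [contDiff_iff_contDiffAt]
  intro x
  by_cases hx : x ∈ tsupport f
  · exact h x hx
  · exact contDiffAt_const.congr_of_eventuallyEq (notMem_tsupport_iff_eventuallyEq.mp hx)

theorem elliptic_reg (b : Module.Basis ι ℝ W)
    (E E' : ι → V →L[ℝ] V)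
    (hE : ∀ i j x, E' i (E j x) + E' j (E i x) = if i = j then (2 : ℝ) • x else 0)
    (D : Set W) (hD : IsOpen D) (u : W → V) (hu : ContDiffOn ℝ 1 u D)
    (hCR : ∀ x ∈ D, ∑ j, E j (fderiv ℝ u x (b j)) = 0) : ContDiffOn ℝ ∞ u D := by
  borelize W
  have : CompleteSpace V := FiniteDimensional.complete ℝ V
  intro z0 hz0
  apply ContDiffAt.contDiffWithinAt
  obtain ⟨R4, hR4, hball⟩ := Metric.isOpen_iff.mp hD z0 hz0
  set R := R4 / 4 with hR
  have hRpos : 0 < R := by positivity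
  let χ : ContDiffBump z0 := ⟨2 * R, 3 * R, by positivity, by linarith⟩
  have hχt : tsupport χ ⊆ D := by
    rw [χ.tsupport_eq]
    refine subset_trans ?_ hball
    apply Metric.closedBall_subset_ball
    show 3 * R < R4
    rw [hR]; linarith
  set U : W → V := fun x => χ x • u x with hU
  have hUt : tsupport U ⊆ tsupport χ := tsupport_smul_subset_left χ u
  have hU1 : ContDiff ℝ 1 U := by
    apply contDiff_of_tsupp
    intro x hx
    have hxD : x ∈ D := hχt (hUt hx)
    exact χ.contDiffAt.smul (hu.contDiffAt (hD.mem_nhds hxD))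
  have hUc : HasCompactSupport U := χ.hasCompactSupport.smul_right
  have hUeq : Set.EqOn U u (Metric.ball z0 (2 * R)) := by
    intro x hx
    have : χ x = 1 := χ.one_of_mem_closedBall (Metric.ball_subset_closedBall hx)
    simp [hU, this]
  have hUev : ∀ x ∈ Metric.ball z0 (2 * R), U =ᶠ[𝓝 x] u := fun x hx =>
    hUeq.eventuallyEq_of_mem (Metric.isOpen_ball.mem_nhds hx)
  set B := ∑ i, ‖b i‖ with hB
  have hB0 : 0 ≤ B := Finset.sum_nonneg fun i _ => norm_nonneg _
  set c := (R / (B + 1)) ^ 2 with hc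
  have hcpos : 0 < c := by positivity
  have hcB : Real.sqrt c * B < R := by
    rw [hc, Real.sqrt_sq (by positivity), div_mul_eq_mul_div, div_lt_iff₀ (by positivity)]
    nlinarith
  let h : ContDiffBump (0 : ℝ) := ⟨c / 2, c, by positivity, by linarith⟩
  have hh0 : ∀ s, c ≤ s → h s = 0 := by
    intro s hs
    apply h.zero_of_le_dist
    show c ≤ dist s 0
    rw [Real.dist_eq, sub_zero, abs_of_nonneg (hcpos.le.trans hs)]
    exact hs
  set μ : Measure W := Measure.addHaar with hμ
  have hNc := Nq_contDiff b
  set φ : W → ℝ := fun y => h (Nq b y) with hφ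
  have hφ1 : ContDiff ℝ ∞ φ := h.contDiff.comp (hNc.of_le le_top)
  have hK : IsCompact {y : W | Nq b y ≤ c} := by
    apply Metric.isCompact_of_isClosed_isBounded
    · exact isClosed_le hNc.continuous continuous_const
    · refine (Metric.isBounded_closedBall (x := (0 : W)) (r := Real.sqrt c * ∑ i, ‖b i‖)).subset ?_
      intro y hy
      simpa using Nq_bound b c y hy
  have hφc : HasCompactSupport φ := by
    refine HasCompactSupport.intro hK fun y hy => hh0 _ ?_
    simp only [Set.mem_ofPred_eq, not_le] at hy
    exact hy.le
  have hpos : 0 < ∫ y, φ y ∂μ := by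
    apply hφ1.continuous.integral_pos_of_hasCompactSupport_nonneg_nonzero hφc (x := 0)
    · intro y; exact h.nonneg
    · have : Nq b (0 : W) = 0 := by simp [Nq]
      simp only [hφ, this]
      exact (h.pos_of_mem_ball (by simpa using hcpos)).ne'
  have hmv : ∀ z ∈ Metric.ball z0 R, (∫ y, φ y ∂μ) • U z = ∫ y, φ y • U (z - y) ∂μ := by
    intro z hz
    refine mean_value μ b E E' hE U hU1 hUc h h.contDiff c hh0 z ?_
    intro y hy δ hδ
    have hmem : z - δ • y ∈ Metric.ball z0 (2 * R) := by
      rw [Metric.mem_ball, dist_eq_norm] at hz ⊢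
      have h1 : ‖δ • y‖ < R := by
        rw [norm_smul, Real.norm_eq_abs, abs_of_nonneg hδ.1]
        have := Nq_bound b c y hy
        have h2 := mul_le_mul_of_nonneg_right hδ.2 (norm_nonneg y)
        linarith
      calc ‖z - δ • y - z0‖ = ‖(z - z0) - δ • y‖ := by congr 1; abel
        _ ≤ ‖z - z0‖ + ‖δ • y‖ := norm_sub_le _ _
        _ < 2 * R := by linarith
    rw [(hUev _ hmem).fderiv_eq]
    apply hCR
    apply hball
    exact Metric.ball_subset_ball (by rw [hR]; linarith) hmem
  have hconv : ContDiff ℝ ∞ (fun z => (∫ y, φ y ∂μ)⁻¹ • ∫ y, φ y • U (z - y) ∂μ) := by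
    have := hφc.contDiff_convolution_left (n := ⊤) (ContinuousLinearMap.lsmul ℝ ℝ) hφ1
      (hU1.continuous.locallyIntegrable (μ := μ))
    exact contDiff_const.smul this
  have hfin : u =ᶠ[𝓝 z0] (fun z => (∫ y, φ y ∂μ)⁻¹ • ∫ y, φ y • U (z - y) ∂μ) := by
    filter_upwards [Metric.ball_mem_nhds z0 hRpos] with z hz
    rw [← hmv z hz, smul_smul, inv_mul_cancel₀ hpos.ne', one_smul]
    exact (hUeq (Metric.ball_subset_ball (by linarith) hz)).symm
  exact hconv.contDiffAt.congr_of_eventuallyEq hfin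

end Reg3


section Had
open MeasureTheory
open scoped ContDiff

universe u

lemma hasFDerivAt_param {H : Type} [NormedAddCommGroup H] [NormedSpace ℝ H] [FiniteDimensional ℝ H]
    {V : Type u} [NormedAddCommGroup V] [NormedSpace ℝ V] [CompleteSpace V]
    (K : ℝ × H → V) (hK : ContDiff ℝ 1 K) (z : H) :
    HasFDerivAt (fun z => ∫ t in (0:ℝ)..1, K (t, z))
      (∫ t in (0:ℝ)..1, (fderiv ℝ K (t, z)).comp (ContinuousLinearMap.inr ℝ ℝ H)) z := by
  have hd : Continuous (fun w : ℝ × H => (fderiv ℝ K w).comp (ContinuousLinearMap.inr ℝ ℝ H)) :=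
    (hK.continuous_fderiv (by norm_num)).clm_comp continuous_const
  obtain ⟨C, hC⟩ : ∃ C, ∀ w ∈ Set.Icc (0:ℝ) 1 ×ˢ Metric.closedBall z 1,
      ‖(fderiv ℝ K w).comp (ContinuousLinearMap.inr ℝ ℝ H)‖ ≤ C :=
    (isCompact_Icc.prod (isCompact_closedBall z 1)).exists_bound_of_continuousOn hd.continuousOn
  refine intervalIntegral.hasFDerivAt_integral_of_dominated_of_fderiv_le
    (F := fun z t => K (t, z))
    (F' := fun z t => (fderiv ℝ K (t, z)).comp (ContinuousLinearMap.inr ℝ ℝ H))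
    (bound := fun _ => C)
    (s := Metric.closedBall z 1) (Metric.closedBall_mem_nhds z one_pos) ?_ ?_ ?_ ?_ ?_ ?_
  · exact Eventually.of_forall fun z => (hK.continuous.comp (by fun_prop)).aestronglyMeasurable
  · exact (hK.continuous.comp (by fun_prop)).intervalIntegrable _ _
  · exact (hd.comp (by fun_prop : Continuous fun t : ℝ => (t, z))).aestronglyMeasurable
  · refine Eventually.of_forall fun t ht x hx => hC (t, x) ⟨?_, hx⟩
    rw [Set.uIoc_of_le zero_le_one] at ht
    exact ⟨ht.1.le, ht.2⟩
  · exact intervalIntegrable_const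
  · refine Eventually.of_forall fun t ht x hx => ?_
    have h1 : HasFDerivAt (fun x : H => (t, x)) (ContinuousLinearMap.inr ℝ ℝ H) x :=
      hasFDerivAt_prodMk_right t x
    exact ((hK.differentiable (by norm_num)) (t, x)).hasFDerivAt.comp x h1

lemma contDiff_param_nat {H : Type} [NormedAddCommGroup H] [NormedSpace ℝ H]
    [FiniteDimensional ℝ H] (n : ℕ) :
    ∀ {V : Type u} [NormedAddCommGroup V] [NormedSpace ℝ V] [CompleteSpace V]
    (K : ℝ × H → V) (_ : ContDiff ℝ ∞ K),
    ContDiff ℝ n (fun z => ∫ t in (0:ℝ)..1, K (t, z)) := by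
  induction n with
  | zero =>
    intro V _ _ _ K hK
    have : Differentiable ℝ (fun z => ∫ t in (0:ℝ)..1, K (t, z)) := fun z =>
      (hasFDerivAt_param K (hK.of_le (by simp)) z).differentiableAt
    exact contDiff_zero.mpr this.continuous
  | succ n ih =>
    intro V _ _ _ K hK
    push_cast
    rw [contDiff_succ_iff_hasFDerivAt]
    exact ⟨_, ih (fun w => (fderiv ℝ K w).comp (ContinuousLinearMap.inr ℝ ℝ H))
      ((hK.fderiv_right (by simp)).clm_comp contDiff_const),
      fun z => hasFDerivAt_param K (hK.of_le (by simp)) z⟩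

/-- Hadamard quotient -/
noncomputable def hq {X V : Type*} [NormedAddCommGroup X] [NormedSpace ℝ X]
    [NormedAddCommGroup V] [NormedSpace ℝ V] (F : X × ℝ → V) (z : X × ℝ) : V :=
  if z.2 = 0 then fderiv ℝ F z (0, 1) else (z.2)⁻¹ • F z

lemma hq_contDiffOn {X : Type} [NormedAddCommGroup X] [NormedSpace ℝ X] [FiniteDimensional ℝ X]
    {V : Type u} [NormedAddCommGroup V] [NormedSpace ℝ V] [CompleteSpace V]
    (F : X × ℝ → V) (D : Set (X × ℝ)) (hD : IsOpen D) (hF : ContDiffOn ℝ ∞ F D)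
    (hF0 : ∀ z ∈ D, z.2 = 0 → F z = 0) : ContDiffOn ℝ ∞ (hq F) D := by
  intro z0 hz0
  apply ContDiffAt.contDiffWithinAt
  by_cases h0 : z0.2 = 0
  swap
  · have h1 : hq F =ᶠ[𝓝 z0] fun z => (z.2)⁻¹ • F z := by
      filter_upwards [(isOpen_ne_fun continuous_snd continuous_const).mem_nhds h0] with z hz
      simp only [hq]
      rw [if_neg hz]
    refine ContDiffAt.congr_of_eventuallyEq ?_ h1
    exact (contDiffAt_snd.inv h0).smul (hF.contDiffAt (hD.mem_nhds hz0))
  obtain ⟨R4, hR4, hball⟩ := Metric.isOpen_iff.mp hD z0 hz0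
  set R := R4 / 4 with hR
  have hRpos : 0 < R := by positivity
  let χ : ContDiffBump z0 := ⟨2 * R, 3 * R, by positivity, by linarith⟩
  have hχt : tsupport χ ⊆ D := by
    rw [χ.tsupport_eq]
    refine subset_trans ?_ hball
    apply Metric.closedBall_subset_ball
    show 3 * R < R4
    rw [hR]; linarith
  set U : X × ℝ → V := fun x => χ x • F x with hU
  have hUt : tsupport U ⊆ tsupport χ := tsupport_smul_subset_left χ F
  have hU1 : ContDiff ℝ ∞ U := by
    apply contDiff_of_tsupp
    intro x hx
    have hxD : x ∈ D := hχt (hUt hx)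
    exact χ.contDiffAt.smul (hF.contDiffAt (hD.mem_nhds hxD))
  have hUeq : Set.EqOn U F (Metric.ball z0 (2 * R)) := by
    intro x hx
    have : χ x = 1 := χ.one_of_mem_closedBall (Metric.ball_subset_closedBall hx)
    simp [hU, this]
  have hUev : ∀ x ∈ Metric.ball z0 (2 * R), U =ᶠ[𝓝 x] F := fun x hx =>
    hUeq.eventuallyEq_of_mem (Metric.isOpen_ball.mem_nhds hx)
  set P : X × ℝ → V := fun z => ∫ t in (0:ℝ)..1, fderiv ℝ U (z.1, t * z.2) (0, 1) with hP
  have hPs : ContDiff ℝ ∞ P := by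
    rw [contDiff_infty]
    intro n
    refine contDiff_param_nat n (fun w : ℝ × (X × ℝ) => fderiv ℝ U (w.2.1, w.1 * w.2.2) (0, 1)) ?_
    have hU2 : ContDiff ℝ ∞ (fderiv ℝ U) := hU1.fderiv_right (by simp)
    exact (hU2.comp (by fun_prop)).clm_apply contDiff_const
  refine hPs.contDiffAt.congr_of_eventuallyEq ?_
  filter_upwards [Metric.ball_mem_nhds z0 (by positivity : 0 < 2 * R)] with w hw
  simp only [hq]
  split_ifs with hw0
  · have : ∀ t : ℝ, fderiv ℝ U (w.1, t * w.2) (0, 1) = fderiv ℝ U w (0, 1) := by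
      intro t
      rw [hw0, mul_zero, ← hw0]
    simp only [hP, this]
    rw [(hUev w hw).fderiv_eq]
    simp
  · have hd : ∀ t : ℝ, HasDerivAt (fun t : ℝ => U (w.1, t * w.2))
        (w.2 • fderiv ℝ U (w.1, t * w.2) (0, 1)) t := by
      intro t
      have h1 : HasDerivAt (fun t : ℝ => (w.1, t * w.2)) ((0 : X), w.2) t := by
        refine (hasDerivAt_const t w.1).prodMk ?_
        simpa using (hasDerivAt_id t).mul_const w.2
      have h2 := ((hU1.differentiable (by simp)) (w.1, t * w.2)).hasFDerivAt.comp_hasDerivAt t h1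
      have h3 : ((0 : X), w.2) = w.2 • ((0 : X), (1 : ℝ)) := by simp
      rw [h3, map_smul] at h2
      exact h2
    have hcont : Continuous (fun t : ℝ => w.2 • fderiv ℝ U (w.1, t * w.2) (0, 1)) := by
      have hU2 : Continuous (fderiv ℝ U) := hU1.continuous_fderiv (by simp)
      exact continuous_const.smul ((hU2.comp (by fun_prop)).clm_apply continuous_const)
    have hi := intervalIntegral.integral_eq_sub_of_hasDerivAt (fun t _ => hd t)
      (hcont.intervalIntegrable 0 1)
    have hw2 : (w.1, (0 : ℝ)) ∈ Metric.ball z0 (2 * R) := by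
      rw [Metric.mem_ball, Prod.dist_eq] at hw ⊢
      simp only [h0, dist_self] at hw ⊢
      exact lt_of_le_of_lt (max_le (le_max_left _ _) (le_trans dist_nonneg (le_max_right _ _))) hw
    have hU0 : U (w.1, 0) = 0 := by
      rw [hUeq hw2]
      apply hF0 _ _ rfl
      apply hball
      exact Metric.ball_subset_ball (by rw [hR]; linarith) hw2
    rw [intervalIntegral.integral_smul] at hi
    simp only [one_mul, zero_mul, hU0, sub_zero] at hi
    have : U w = F w := hUeq hw
    rw [← this]
    show (w.2)⁻¹ • U (w.1, w.2) = P w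
    rw [← hi, smul_smul, inv_mul_cancel₀ hw0, one_smul]

end Had


section Stem
open scoped ContDiff

variable {A : Type*} [NormedAddCommGroup A] [NormedSpace ℝ A] [CompleteSpace A]
variable {p : ℕ}

/-- smooth and even on `D` -/
structure SE (D : Set ((Fin (p + 1) → ℝ) × ℝ)) (E : (Fin (p + 1) → ℝ) × ℝ → A) : Prop where
  smooth : ContDiffOn ℝ ∞ E D
  even : ∀ z ∈ D, E (reflD p z) = E z

/-- the reflection as a continuous linear map -/
noncomputable def reflL (p : ℕ) :
    ((Fin (p + 1) → ℝ) × ℝ) →L[ℝ] ((Fin (p + 1) → ℝ) × ℝ) :=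
  (ContinuousLinearMap.fst ℝ _ _).prod (-(ContinuousLinearMap.snd ℝ _ _))

omit [CompleteSpace A] in
lemma fderiv_even {D : Set ((Fin (p + 1) → ℝ) × ℝ)} (hD : IsOpen D)
    (hR : ∀ z ∈ D, reflD p z ∈ D) {E : (Fin (p + 1) → ℝ) × ℝ → A} (hE : SE D E)
    (z) (hz : z ∈ D) (a : Fin (p + 1) → ℝ) (r : ℝ) :
    fderiv ℝ E (reflD p z) (a, r) = fderiv ℝ E z (a, -r) := by
  have h1 : (fun w => E (reflL p w)) =ᶠ[𝓝 z] E := by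
    filter_upwards [hD.mem_nhds hz] with w hw
    exact hE.even w hw
  have h2 : HasFDerivAt E (fderiv ℝ E (reflL p z)) (reflL p z) :=
    ((hE.smooth.contDiffAt (hD.mem_nhds (hR z hz))).differentiableAt (by simp)).hasFDerivAt
  have h3 := h2.comp z (reflL p).hasFDerivAt
  have h4 : fderiv ℝ (fun w => E (reflL p w)) z = _ := h3.fderiv
  rw [← h1.fderiv_eq, h4]
  simp [reflL, reflD]

omit [CompleteSpace A] in
lemma smooth_fderiv_apply {D : Set ((Fin (p + 1) → ℝ) × ℝ)} (hD : IsOpen D)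
    {E : (Fin (p + 1) → ℝ) × ℝ → A} (hE : ContDiffOn ℝ ∞ E D) (w) :
    ContDiffOn ℝ ∞ (fun z => fderiv ℝ E z w) D :=
  (hE.fderiv_of_isOpen hD (by simp)).clm_apply contDiffOn_const

omit [CompleteSpace A] in
lemma SE.diffAt {D : Set ((Fin (p + 1) → ℝ) × ℝ)} (hD : IsOpen D)
    {E : (Fin (p + 1) → ℝ) × ℝ → A} (hE : ContDiffOn ℝ ∞ E D) {z} (hz : z ∈ D) :
    DifferentiableAt ℝ E z := (hE.contDiffAt (hD.mem_nhds hz)).differentiableAt (by simp)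

omit [CompleteSpace A] in
lemma SE.pdx {D : Set ((Fin (p + 1) → ℝ) × ℝ)} (hD : IsOpen D)
    (hR : ∀ z ∈ D, reflD p z ∈ D) {E : (Fin (p + 1) → ℝ) × ℝ → A} (hE : SE D E)
    (a : Fin (p + 1) → ℝ) : SE D (fun z => fderiv ℝ E z (a, 0)) where
  smooth := smooth_fderiv_apply hD hE.smooth _
  even z hz := by rw [fderiv_even hD hR hE z hz]; simp

omit [CompleteSpace A] in
lemma SE.pdSr_zero {D : Set ((Fin (p + 1) → ℝ) × ℝ)} (hD : IsOpen D)
    (hR : ∀ z ∈ D, reflD p z ∈ D) {E : (Fin (p + 1) → ℝ) × ℝ → A} (hE : SE D E)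
    (z) (hz : z ∈ D) (h0 : z.2 = 0) : pdSr p E z = 0 := by
  have h1 := fderiv_even hD hR hE z hz 0 1
  have h2 : reflD p z = z := by
    simp only [reflD, h0, neg_zero]; rw [← h0]
  rw [h2] at h1
  have h3 : ((0 : Fin (p + 1) → ℝ), (-1 : ℝ)) = -((0 : Fin (p + 1) → ℝ), (1 : ℝ)) := by simp
  rw [h3, map_neg] at h1
  have h4 : (2 : ℝ) • pdSr p E z = 0 := by
    rw [two_smul]
    unfold pdSr
    nth_rewrite 1 [h1]
    simp
  simpa using h4

lemma SE.T1 {D : Set ((Fin (p + 1) → ℝ) × ℝ)} (hD : IsOpen D)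
    (hR : ∀ z ∈ D, reflD p z ∈ D) {E : (Fin (p + 1) → ℝ) × ℝ → A} (hE : SE D E) :
    SE D (T1 p E) where
  smooth := hq_contDiffOn (pdSr p E) D hD (smooth_fderiv_apply hD hE.smooth _)
    (hE.pdSr_zero hD hR)
  even z hz := by
    by_cases h0 : z.2 = 0
    · have h2 : reflD p z = z := by
        simp only [reflD, h0, neg_zero]; rw [← h0]
      rw [h2]
    · have h1 := fderiv_even hD hR hE z hz 0 1
      have h3 : ((0 : Fin (p + 1) → ℝ), (-1 : ℝ)) = -((0 : Fin (p + 1) → ℝ), (1 : ℝ)) := by simp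
      rw [h3, map_neg] at h1
      have h5 : (reflD p z).2 = - z.2 := rfl
      simp only [GPSM.T1, pdSr]
      rw [h5, if_neg h0, if_neg (by simpa using h0), h1]
      simp [inv_neg]

omit [CompleteSpace A] in
lemma SE.r_T1 {D : Set ((Fin (p + 1) → ℝ) × ℝ)} (hD : IsOpen D)
    (hR : ∀ z ∈ D, reflD p z ∈ D) {E : (Fin (p + 1) → ℝ) × ℝ → A} (hE : SE D E)
    (z) (hz : z ∈ D) : z.2 • GPSM.T1 p E z = pdSr p E z := by
  by_cases h0 : z.2 = 0
  · rw [hE.pdSr_zero hD hR z hz h0, h0, zero_smul]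
  · simp only [GPSM.T1]
    rw [if_neg h0, smul_smul, mul_inv_cancel₀ h0, one_smul]

omit [CompleteSpace A] in
lemma r_cancel {D : Set ((Fin (p + 1) → ℝ) × ℝ)} (hD : IsOpen D)
    {X Y : (Fin (p + 1) → ℝ) × ℝ → A} (hX : ContinuousOn X D) (hY : ContinuousOn Y D)
    (h : ∀ z ∈ D, z.2 • X z = z.2 • Y z) : ∀ z ∈ D, X z = Y z := by
  intro z hz
  by_cases h0 : z.2 = 0
  swap
  · exact smul_right_injective A h0 (h z hz)
  have hc : Tendsto (fun t : ℝ => (z.1, t)) (𝓝[≠] 0) (𝓝 z) := by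
    have : Continuous (fun t : ℝ => (z.1, t)) := by fun_prop
    have h1 := (this.tendsto 0).mono_left (nhdsWithin_le_nhds (s := {0}ᶜ))
    have h2 : (z.1, (0:ℝ)) = z := by rw [← h0]
    rwa [h2] at h1
  have hXt := (hX.continuousAt (hD.mem_nhds hz)).tendsto.comp hc
  have hYt := (hY.continuousAt (hD.mem_nhds hz)).tendsto.comp hc
  refine tendsto_nhds_unique hXt (hYt.congr' ?_)
  filter_upwards [hc.eventually (hD.mem_nhds hz), self_mem_nhdsWithin] with t ht ht0
  exact (smul_right_injective A ht0 (h (z.1, t) ht)).symm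

omit [CompleteSpace A] in
/-- derivative of `r • Q` -/
lemma fderiv_r_smul {Q : (Fin (p + 1) → ℝ) × ℝ → A} {z} (hQ : DifferentiableAt ℝ Q z) (a) (t : ℝ) :
    fderiv ℝ (fun z => z.2 • Q z) z (a, t) = z.2 • fderiv ℝ Q z (a, t) + t • Q z := by
  rw [fderiv_fun_smul differentiableAt_snd hQ, fderiv_snd]
  simp

lemma two_le_inf : (2 : WithTop ℕ∞) ≤ ∞ := by
  exact WithTop.coe_le_coe.mpr (le_top : (2 : ℕ∞) ≤ ⊤)

omit [CompleteSpace A] in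
lemma fderiv_apply_fderiv {D : Set ((Fin (p + 1) → ℝ) × ℝ)} (hD : IsOpen D)
    {E : (Fin (p + 1) → ℝ) × ℝ → A} (hE : ContDiffOn ℝ ∞ E D) {z} (hz : z ∈ D) (a b) :
    fderiv ℝ (fun z => fderiv ℝ E z a) z b = fderiv ℝ (fun z => fderiv ℝ E z b) z a := by
  have hd : DifferentiableAt ℝ (fderiv ℝ E) z :=
    SE.diffAt hD (hE.fderiv_of_isOpen hD (by simp)) hz
  have e : ∀ a b, fderiv ℝ (fun z => fderiv ℝ E z a) z b = fderiv ℝ (fderiv ℝ E) z b a := by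
    intro a b
    rw [fderiv_clm_apply hd (differentiableAt_const a)]
    simp
  rw [e, e]
  exact ((hE.contDiffAt (hD.mem_nhds hz)).isSymmSndFDerivAt (by simp; exact two_le_inf)).eq b a

lemma r_pdSx_T1 {D : Set ((Fin (p + 1) → ℝ) × ℝ)} (hD : IsOpen D)
    (hR : ∀ z ∈ D, reflD p z ∈ D) {E : (Fin (p + 1) → ℝ) × ℝ → A} (hE : SE D E)
    (s) (z) (hz : z ∈ D) : z.2 • pdSx p s (GPSM.T1 p E) z = pdSr p (pdSx p s E) z := by
  have h1 : pdSr p E =ᶠ[𝓝 z] fun z => z.2 • GPSM.T1 p E z := by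
    filter_upwards [hD.mem_nhds hz] with w hw
    exact (hE.r_T1 hD hR w hw).symm
  have h2 : pdSr p (pdSx p s E) z = pdSx p s (pdSr p E) z := fderiv_apply_fderiv hD hE.smooth hz _ _
  rw [h2]
  unfold pdSx
  rw [h1.fderiv_eq, fderiv_r_smul (SE.diffAt hD (hE.T1 hD hR).smooth hz)]
  simp

/-- Cauchy-Riemann pair at level `c` -/
structure CRc (L Lb : ℕ → A →L[ℝ] A) (D : Set ((Fin (p + 1) → ℝ) × ℝ)) (c : ℝ)
    (E G : (Fin (p + 1) → ℝ) × ℝ → A) : Prop where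
  seE : SE D E
  seG : SE D G
  cr1 : ∀ z ∈ D, ∑ s : Fin (p + 1), L s (pdSx p s E z) = c • G z + z.2 ^ 2 • GPSM.T1 p G z
  cr2 : ∀ z ∈ D, ∑ s : Fin (p + 1), Lb s (pdSx p s G z) = - GPSM.T1 p E z

lemma pdSr_sum {D : Set ((Fin (p + 1) → ℝ) × ℝ)} (hD : IsOpen D)
    (hR : ∀ z ∈ D, reflD p z ∈ D) {E : (Fin (p + 1) → ℝ) × ℝ → A} (hE : SE D E)
    (L : ℕ → A →L[ℝ] A) (z) (hz : z ∈ D) :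
    z.2 • ∑ s : Fin (p + 1), L s (pdSx p s (GPSM.T1 p E) z) =
      pdSr p (fun z => ∑ s : Fin (p + 1), L s (pdSx p s E z)) z := by
  have h1 : HasFDerivAt (fun z => ∑ s : Fin (p + 1), L s (pdSx p s E z))
      (∑ s : Fin (p + 1), (L s).comp (fderiv ℝ (pdSx p s E) z)) z := by
    refine HasFDerivAt.fun_sum fun s _ => ?_
    exact (L s).hasFDerivAt.comp z
      (SE.diffAt hD (smooth_fderiv_apply hD hE.smooth _) hz).hasFDerivAt
  unfold pdSr
  rw [h1.fderiv, Finset.smul_sum, sum_apply]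
  refine Finset.sum_congr rfl fun s _ => ?_
  rw [← map_smul, r_pdSx_T1 hD hR hE s z hz]
  rfl

omit [CompleteSpace A] in
lemma cont_sum {D : Set ((Fin (p + 1) → ℝ) × ℝ)} (hD : IsOpen D)
    {E : (Fin (p + 1) → ℝ) × ℝ → A} (hE : ContDiffOn ℝ ∞ E D) (L : ℕ → A →L[ℝ] A) :
    ContinuousOn (fun z => ∑ s : Fin (p + 1), L s (pdSx p s E z)) D :=
  continuousOn_finsetSum _ fun s _ =>
    (L s).continuous.comp_continuousOn (smooth_fderiv_apply hD hE _).continuousOn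

lemma CRc.step {L Lb : ℕ → A →L[ℝ] A} {D : Set ((Fin (p + 1) → ℝ) × ℝ)} (hD : IsOpen D)
    (hR : ∀ z ∈ D, reflD p z ∈ D) {c : ℝ} {E G : (Fin (p + 1) → ℝ) × ℝ → A}
    (h : CRc L Lb D c E G) : CRc L Lb D (c + 2) (GPSM.T1 p E) (GPSM.T1 p G) := by
  have hE1 := h.seE.T1 hD hR
  have hG1 := h.seG.T1 hD hR
  have hE2 := hE1.T1 hD hR
  have hG2 := hG1.T1 hD hR
  refine ⟨hE1, hG1, ?_, ?_⟩
  · apply r_cancel hD (cont_sum hD hE1.smooth L)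
    · exact (continuousOn_const.smul hG1.smooth.continuousOn).add
        ((continuous_snd.pow 2).continuousOn.smul hG2.smooth.continuousOn)
    intro z hz
    rw [pdSr_sum hD hR h.seE L z hz]
    have h1 : (fun z => ∑ s : Fin (p + 1), L s (pdSx p s E z)) =ᶠ[𝓝 z]
        fun z => c • G z + z.2 • (z.2 • GPSM.T1 p G z) := by
      filter_upwards [hD.mem_nhds hz] with w hw
      rw [h.cr1 w hw, smul_smul, pow_two]
    have dG := SE.diffAt hD h.seG.smooth hz
    have dG1 := SE.diffAt hD hG1.smooth hz
    have r1 := h.seG.r_T1 hD hR z hz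
    have r2 := hG1.r_T1 hD hR z hz
    have d2 : DifferentiableAt ℝ (fun z : (Fin (p + 1) → ℝ) × ℝ => z.2 • GPSM.T1 p G z) z :=
      differentiableAt_snd.smul dG1
    have e1 : DifferentiableAt ℝ (fun z => c • G z) z := dG.const_smul c
    have e2 : DifferentiableAt ℝ
        (fun z : (Fin (p + 1) → ℝ) × ℝ => z.2 • z.2 • GPSM.T1 p G z) z :=
      differentiableAt_snd.smul d2
    unfold pdSr at *
    rw [h1.fderiv_eq, fderiv_fun_add e1 e2,
      fderiv_fun_const_smul dG, add_apply, fderiv_r_smul d2, fderiv_r_smul dG1, smul_apply,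
      ← r1, ← r2]
    module
  · apply r_cancel hD (cont_sum hD hG1.smooth Lb)
    · exact hE2.smooth.continuousOn.neg
    intro z hz
    rw [pdSr_sum hD hR h.seG Lb z hz]
    have h1 : (fun z => ∑ s : Fin (p + 1), Lb s (pdSx p s G z)) =ᶠ[𝓝 z]
        fun z => - GPSM.T1 p E z := by
      filter_upwards [hD.mem_nhds hz] with w hw
      rw [h.cr2 w hw]
    have r2 := hE1.r_T1 hD hR z hz
    unfold pdSr at *
    rw [h1.fderiv_eq, fderiv_fun_neg, neg_apply, ← r2, smul_neg]

lemma CRc.iter {L Lb : ℕ → A →L[ℝ] A} {D : Set ((Fin (p + 1) → ℝ) × ℝ)} (hD : IsOpen D)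
    (hR : ∀ z ∈ D, reflD p z ∈ D) {c : ℝ} {E G : (Fin (p + 1) → ℝ) × ℝ → A}
    (h : CRc L Lb D c E G) (k : ℕ) :
    CRc L Lb D (c + 2 * k) ((GPSM.T1 p)^[k] E) ((GPSM.T1 p)^[k] G) := by
  induction k with
  | zero => simpa using h
  | succ k ih =>
    rw [Function.iterate_succ_apply', Function.iterate_succ_apply']
    have := ih.step hD hR
    convert this using 1
    push_cast; ring

lemma T2_step {D : Set ((Fin (p + 1) → ℝ) × ℝ)} (hD : IsOpen D)
    (hR : ∀ z ∈ D, reflD p z ∈ D) {Q K : (Fin (p + 1) → ℝ) × ℝ → A} (hQ : SE D Q)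
    (hK : ∀ z ∈ D, K z = z.2 • Q z) : ∀ z ∈ D, T2 p K z = z.2 • GPSM.T1 p Q z := by
  intro z hz
  have dQ := SE.diffAt hD hQ.smooth hz
  rw [hQ.r_T1 hD hR z hz]
  simp only [T2]
  split_ifs with h0
  · have h1 : pdSr p K =ᶠ[𝓝 z] fun z => z.2 • pdSr p Q z + Q z := by
      filter_upwards [hD.mem_nhds hz] with w hw
      have : K =ᶠ[𝓝 w] fun z => z.2 • Q z := by
        filter_upwards [hD.mem_nhds hw] with w' hw'
        exact hK w' hw'
      unfold pdSr
      rw [this.fderiv_eq, fderiv_r_smul (SE.diffAt hD hQ.smooth hw), one_smul]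
    have d1 : DifferentiableAt ℝ (pdSr p Q) z := SE.diffAt hD (smooth_fderiv_apply hD hQ.smooth _) hz
    have e := hQ.pdSr_zero hD hR z hz h0
    unfold pdSr2
    rw [e]
    have e1 : DifferentiableAt ℝ
        (fun z : (Fin (p + 1) → ℝ) × ℝ => z.2 • pdSr p Q z) z := differentiableAt_snd.smul d1
    change (2:ℝ)⁻¹ • fderiv ℝ (pdSr p K) z (0,1) = 0
    rw [h1.fderiv_eq, fderiv_fun_add e1 dQ, add_apply,
      fderiv_r_smul d1, h0, e]
    unfold pdSr at e
    rw [e]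
    simp
  · have h1 : (fun t : ℝ => t⁻¹ • K (z.1, t)) =ᶠ[𝓝 z.2] fun t => Q (z.1, t) := by
      have hc : Tendsto (fun t : ℝ => (z.1, t)) (𝓝 z.2) (𝓝 z) := by
        have : Continuous (fun t : ℝ => (z.1, t)) := by fun_prop
        exact this.tendsto z.2
      filter_upwards [hc.eventually (hD.mem_nhds hz),
        isOpen_ne.mem_nhds h0] with t ht ht0
      rw [hK _ ht, smul_smul, inv_mul_cancel₀ ht0, one_smul]
    rw [h1.fderiv_eq]
    have h2 : HasFDerivAt (fun t : ℝ => (z.1, t)) (ContinuousLinearMap.inr ℝ _ ℝ) z.2 :=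
      hasFDerivAt_prodMk_right z.1 z.2
    have h3 : HasFDerivAt Q (fderiv ℝ Q z) (z.1, z.2) := dQ.hasFDerivAt
    have h4 := (h3.comp z.2 h2).fderiv
    have h5 : fderiv ℝ (fun t => Q (z.1, t)) z.2 = _ := h4
    rw [h5]
    rfl

lemma T2_iter {D : Set ((Fin (p + 1) → ℝ) × ℝ)} (hD : IsOpen D)
    (hR : ∀ z ∈ D, reflD p z ∈ D) {Q K : (Fin (p + 1) → ℝ) × ℝ → A} (hQ : SE D Q)
    (hK : ∀ z ∈ D, K z = z.2 • Q z) (k : ℕ) :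
    SE D ((GPSM.T1 p)^[k] Q) ∧ ∀ z ∈ D, (T2 p)^[k] K z = z.2 • (GPSM.T1 p)^[k] Q z := by
  induction k with
  | zero => exact ⟨hQ, hK⟩
  | succ k ih =>
    rw [Function.iterate_succ_apply', Function.iterate_succ_apply']
    exact ⟨ih.1.T1 hD hR, T2_step hD hR ih.1 ih.2⟩

end Stem


section Clifford
open scoped ContDiff

variable {A : Type*} [NormedAddCommGroup A] [NormedSpace ℝ A]

/-- Clifford relations for a family of left multiplications. -/
structure Clf (L Lb : ℕ → A →L[ℝ] A) (m : ℕ) : Prop where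
  L0 : ∀ a, L 0 a = a
  Lb0 : ∀ a, Lb 0 a = a
  Lbn : ∀ s, 1 ≤ s → ∀ a, Lb s a = - L s a
  sq : ∀ s, 1 ≤ s → s ≤ m → ∀ a, L s (L s a) = - a
  anti : ∀ s t, 1 ≤ s → s ≤ m → 1 ≤ t → t ≤ m → s ≠ t → ∀ a, L s (L t a) = - L t (L s a)

lemma Clf.rel {L Lb : ℕ → A →L[ℝ] A} {m : ℕ} (h : Clf L Lb m) (s t : ℕ) (hs : s ≤ m) (ht : t ≤ m)
    (a : A) : Lb s (L t a) + Lb t (L s a) = if s = t then (2 : ℝ) • a else 0 := by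
  rcases Nat.eq_zero_or_pos s with rfl | hs'
  · rcases Nat.eq_zero_or_pos t with rfl | ht'
    · simp [h.Lb0, h.L0, two_smul]
    · rw [if_neg (by omega), h.Lb0, h.L0, h.Lbn t ht']; simp
  · rcases Nat.eq_zero_or_pos t with rfl | ht'
    · rw [if_neg (by omega), h.Lb0, h.L0, h.Lbn s hs']; simp
    · rw [h.Lbn t ht', h.Lbn s hs']
      split_ifs with e
      · subst e; rw [h.sq s hs' hs]; simp [two_smul]
      · rw [h.anti s t hs' hs ht' ht e]; simp

lemma Clf.rel' {L Lb : ℕ → A →L[ℝ] A} {m : ℕ} (h : Clf L Lb m) (s t : ℕ) (hs : s ≤ m) (ht : t ≤ m)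
    (a : A) : L s (Lb t a) + L t (Lb s a) = if s = t then (2 : ℝ) • a else 0 := by
  rcases Nat.eq_zero_or_pos s with rfl | hs'
  · rcases Nat.eq_zero_or_pos t with rfl | ht'
    · simp [h.Lb0, h.L0, two_smul]
    · rw [if_neg (by omega), h.Lb0, h.L0, h.Lbn t ht']; simp
  · rcases Nat.eq_zero_or_pos t with rfl | ht'
    · rw [if_neg (by omega), h.Lb0, h.L0, h.Lbn s hs']; simp
    · rw [h.Lbn t ht', h.Lbn s hs', map_neg, map_neg]
      split_ifs with e
      · subst e; rw [h.sq s hs' hs]; simp [two_smul]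
      · rw [h.anti s t hs' hs ht' ht e]; simp

/-- for `s < t`: `L s (L t a) = L t (Lb s a)` -/
lemma Clf.comm {L Lb : ℕ → A →L[ℝ] A} {m : ℕ} (h : Clf L Lb m) (s t : ℕ) (hs : s < t) (ht : t ≤ m)
    (a : A) : L s (L t a) = L t (Lb s a) := by
  rcases Nat.eq_zero_or_pos s with rfl | hs'
  · rw [h.L0, h.Lb0]
  · rw [h.Lbn s hs', h.anti s t hs' (by omega) (by omega) ht (by omega), map_neg]

variable {p : ℕ}

lemma stem_smooth [FiniteDimensional ℝ A] {L Lb : ℕ → A →L[ℝ] A} {m : ℕ} (h : Clf L Lb m)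
    (hp : p ≤ m) (D : Set ((Fin (p + 1) → ℝ) × ℝ)) (hD : IsOpen D)
    (F₁ F₂ : (Fin (p + 1) → ℝ) × ℝ → A)
    (hF₁ : ContDiffOn ℝ 1 F₁ D) (hF₂ : ContDiffOn ℝ 1 F₂ D)
    (c1 : ∀ z ∈ D, ∑ s : Fin (p + 1), L s (pdSx p s F₁ z) = pdSr p F₂ z)
    (c2 : ∀ z ∈ D, ∑ s : Fin (p + 1), Lb s (pdSx p s F₂ z) = - pdSr p F₁ z) :
    ContDiffOn ℝ ∞ F₁ D ∧ ContDiffOn ℝ ∞ F₂ D := by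
  classical
  let b : Module.Basis (Fin (p + 1) ⊕ Unit) ℝ ((Fin (p + 1) → ℝ) × ℝ) :=
    (Pi.basisFun ℝ (Fin (p + 1))).prod (Module.Basis.singleton Unit ℝ)
  let f1 := ContinuousLinearMap.fst ℝ A A
  let f2 := ContinuousLinearMap.snd ℝ A A
  let E : Fin (p + 1) ⊕ Unit → (A × A) →L[ℝ] (A × A) := fun i => match i with
    | .inl s => ((L s).comp f1).prod ((Lb s).comp f2)
    | .inr _ => (-f2).prod f1
  let E' : Fin (p + 1) ⊕ Unit → (A × A) →L[ℝ] (A × A) := fun i => match i with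
    | .inl s => ((Lb s).comp f1).prod ((L s).comp f2)
    | .inr _ => f2.prod (-f1)
  have key : ContDiffOn ℝ ∞ (fun z => (F₁ z, F₂ z)) D := by
    refine elliptic_reg b E E' ?_ D hD _ (hF₁.prodMk hF₂) ?_
    · rintro (s | u) (t | w) ⟨x, y⟩
      · have h1 := h.rel s t (by omega) (by omega) x
        have h2 := h.rel' s t (by omega) (by omega) y
        simp only [Sum.inl.injEq, Fin.ext_iff]
        have : E' (.inl s) (E (.inl t) (x, y)) + E' (.inl t) (E (.inl s) (x, y))
          = (Lb s (L t x) + Lb t (L s x), L s (Lb t y) + L t (Lb s y)) := rfl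
        rw [this, h1, h2]
        split_ifs <;> simp
      · have : E' (.inl s) (E (.inr w) (x, y)) + E' (.inr w) (E (.inl s) (x, y))
          = (Lb s (-y) + Lb s y, L s x + - L s x) := rfl
        rw [this]; simp
      · have : E' (.inr u) (E (.inl t) (x, y)) + E' (.inl t) (E (.inr u) (x, y))
          = (Lb t y + Lb t (-y), - L t x + L t x) := rfl
        rw [this]; simp
      · have : E' (.inr u) (E (.inr w) (x, y)) + E' (.inr w) (E (.inr u) (x, y))
          = (x + x, - -y + - -y) := rfl
        rw [this]; simp [two_smul]
    · intro z hz
      have d1 : HasFDerivAt F₁ (fderiv ℝ F₁ z) z :=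
        ((hF₁.contDiffAt (hD.mem_nhds hz)).differentiableAt (by simp)).hasFDerivAt
      have d2 : HasFDerivAt F₂ (fderiv ℝ F₂ z) z :=
        ((hF₂.contDiffAt (hD.mem_nhds hz)).differentiableAt (by simp)).hasFDerivAt
      rw [(d1.prodMk d2).fderiv, Fintype.sum_sum_type]
      have e1 : ∀ s : Fin (p + 1), b (.inl s) = (Pi.single s 1, 0) := by intro s; simp [b]
      have e2 : ∀ u : Unit, b (.inr u) = (0, 1) := by intro s; simp [b]
      simp only [e1, e2]
      have : (∑ x : Fin (p + 1), (E (.inl x)) (((fderiv ℝ F₁ z).prod (fderiv ℝ F₂ z)) (Pi.single x 1, 0)))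
        = (∑ s : Fin (p + 1), L s (pdSx p s F₁ z), ∑ s : Fin (p + 1), Lb s (pdSx p s F₂ z)) := by
        refine Prod.ext ?_ ?_
        · rw [Prod.fst_sum]; rfl
        · rw [Prod.snd_sum]; rfl
      rw [this, c1 z hz, c2 z hz]
      simp [E, f1, f2, pdSr]
  exact ⟨contDiff_fst.comp_contDiffOn key, contDiff_snd.comp_contDiffOn key⟩

lemma base_pair [FiniteDimensional ℝ A] {L Lb : ℕ → A →L[ℝ] A} {m : ℕ} (h : Clf L Lb m)
    (hp : p ≤ m) (D : Set ((Fin (p + 1) → ℝ) × ℝ)) (hD : IsOpen D)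
    (hR : ∀ z ∈ D, reflD p z ∈ D)
    (F₁ F₂ : (Fin (p + 1) → ℝ) × ℝ → A)
    (hst : IsStem p D F₁ F₂)
    (hF₁ : ContDiffOn ℝ 1 F₁ D) (hF₂ : ContDiffOn ℝ 1 F₂ D)
    (c1 : ∀ z ∈ D, ∑ s : Fin (p + 1), L s (pdSx p s F₁ z) = pdSr p F₂ z)
    (c2 : ∀ z ∈ D, ∑ s : Fin (p + 1), Lb s (pdSx p s F₂ z) = - pdSr p F₁ z) :
    ∃ G, CRc L Lb D 1 F₁ G ∧ ∀ z ∈ D, F₂ z = z.2 • G z := by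
  have : CompleteSpace A := FiniteDimensional.complete ℝ A
  obtain ⟨s1, s2⟩ := stem_smooth h hp D hD F₁ F₂ hF₁ hF₂ c1 c2
  have z0 : ∀ z ∈ D, z.2 = 0 → F₂ z = 0 := by
    intro z hz h0
    have h1 := (hst z hz).2
    have h2 : reflD p z = z := by
      simp only [reflD, h0, neg_zero]; rw [← h0]
    rw [h2] at h1
    have h3 : (2 : ℝ) • F₂ z = 0 := by
      rw [two_smul]
      nth_rewrite 1 [h1]
      simp
    simpa using h3
  have hG := hq_contDiffOn F₂ D hD s2 z0
  have hF : ∀ z ∈ D, F₂ z = z.2 • hq F₂ z := by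
    intro z hz
    unfold hq
    split_ifs with h0
    · rw [z0 z hz h0, h0, zero_smul]
    · rw [smul_smul, mul_inv_cancel₀ h0, one_smul]
  have seG : SE D (hq F₂) := by
    refine ⟨hG, fun z hz => ?_⟩
    by_cases h0 : z.2 = 0
    · have h2 : reflD p z = z := by
        simp only [reflD, h0, neg_zero]; rw [← h0]
      rw [h2]
    · have h1 := (hst z hz).2
      have h5 : (reflD p z).2 = - z.2 := rfl
      simp only [hq]
      rw [h5, if_neg h0, if_neg (by simpa using h0), h1]
      simp [inv_neg]
  have seE : SE D F₁ := ⟨s1, fun z hz => (hst z hz).1⟩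
  have dF : ∀ z ∈ D, ∀ a t, fderiv ℝ F₂ z (a, t) = z.2 • fderiv ℝ (hq F₂) z (a, t) + t • hq F₂ z := by
    intro z hz a t
    have h1 : F₂ =ᶠ[𝓝 z] fun z => z.2 • hq F₂ z := by
      filter_upwards [hD.mem_nhds hz] with w hw
      exact hF w hw
    rw [h1.fderiv_eq, fderiv_r_smul (SE.diffAt hD hG hz)]
  refine ⟨hq F₂, ⟨seE, seG, ?_, ?_⟩, hF⟩
  · intro z hz
    rw [c1 z hz, one_smul, pow_two, mul_smul, seG.r_T1 hD hR z hz]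
    unfold pdSr
    rw [dF z hz, one_smul, add_comm]
  · apply r_cancel hD (cont_sum hD hG Lb)
    · exact (seE.T1 hD hR).smooth.continuousOn.neg
    intro z hz
    rw [smul_neg, seE.r_T1 hD hR z hz, ← c2 z hz, Finset.smul_sum]
    refine Finset.sum_congr rfl fun s _ => ?_
    unfold pdSx
    rw [dF z hz]
    simp

end Clifford

section Alg
variable {A : Type*} [NormedAddCommGroup A] [NormedSpace ℝ A] [Mul A] [One A]

/-- left multiplication -/
noncomputable def lmul {conj : A → A} (H : IsAltStarAlg A conj) (a : A) : A →L[ℝ] A :=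
  haveI := H.finDim
  LinearMap.toContinuousLinearMap
    { toFun := fun b => a * b
      map_add' := H.mul_add' a
      map_smul' := fun r b => H.mul_smul' r a b }

lemma lmul_apply {conj : A → A} (H : IsAltStarAlg A conj) (a b : A) : lmul H a b = a * b := rfl

lemma alg_neg_mul {conj : A → A} (H : IsAltStarAlg A conj) (a b : A) : (-a) * b = -(a * b) := by
  have := H.smul_mul' (-1) a b
  simpa using this

lemma alg_mul_neg {conj : A → A} (H : IsAltStarAlg A conj) (a b : A) : a * (-b) = -(a * b) := by
  have := H.mul_smul' (-1) a b
  simpa using this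

lemma alg_sq {conj : A → A} (H : IsAltStarAlg A conj) {v : ℕ → A} {m : ℕ}
    (hv : IsHypBasis A conj v m) (s : ℕ) (h1 : 1 ≤ s) (h2 : s ≤ m) : v s * v s = -1 := by
  have h3 : conj (v s) = - v s := (neg_eq_of_add_eq_zero_right (hv.trace_zero s h1 h2)).symm
  have h4 := hv.norm_one s h1 h2
  rw [h3, alg_mul_neg H] at h4
  rw [← h4, neg_neg]

lemma alg_clf {conj : A → A} (H : IsAltStarAlg A conj) {v : ℕ → A} {m : ℕ}
    (hv : IsHypBasis A conj v m) :
    Clf (fun s => lmul H (v s)) (fun s => if s = 0 then ContinuousLinearMap.id ℝ A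
      else - lmul H (v s)) m where
  L0 a := by rw [lmul_apply, hv.v_zero, H.one_mul']
  Lb0 a := by simp
  Lbn s hs a := by rw [if_neg (by omega)]; rfl
  sq s h1 h2 a := by
    rw [lmul_apply, lmul_apply, H.alt_left, alg_sq H hv s h1 h2, alg_neg_mul H, H.one_mul']
  anti s t h1 h2 h3 h4 hst a := by
    simp only [lmul_apply]
    have e := H.alt_left (v s + v t) a
    rw [H.add_mul', H.add_mul', H.mul_add', H.mul_add', H.mul_add', H.add_mul', H.add_mul',
      H.add_mul', H.add_mul', H.add_mul', H.alt_left, H.alt_left, hv.anticomm s t h1 h2 h3 h4 hst,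
      alg_neg_mul H] at e
    have e2 : v s * (v t * a) + v t * (v s * a) = 0 := by
      have := sub_eq_zero.mpr e
      rw [← this]; abel
    exact eq_neg_of_add_eq_zero_left e2

lemma emb_mul {conj : A → A} (H : IsAltStarAlg A conj) (v : ℕ → A) (m : ℕ)
    (x : Fin (m + 1) → ℝ) (a : A) : emb v m x * a = ∑ s : Fin (m + 1), x s • lmul H (v s) a := by
  have : ∀ (S : Finset (Fin (m + 1))), (∑ s ∈ S, x s • v (s : ℕ)) * a
      = ∑ s ∈ S, x s • lmul H (v s) a := by
    intro S
    induction S using Finset.cons_induction with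
    | empty =>
      simp only [Finset.sum_empty]
      have := H.smul_mul' 0 0 a
      simpa using this
    | cons s S hs ih =>
      rw [Finset.sum_cons, Finset.sum_cons, H.add_mul', ih, H.smul_mul', lmul_apply]
  exact this _

lemma alg_one_ne_zero {conj : A → A} (H : IsAltStarAlg A conj) : (1 : A) ≠ 0 := by
  intro h
  have : ∀ a : A, a = 0 := by
    intro a
    have h1 := H.one_mul' a
    rw [h] at h1
    have := H.smul_mul' 0 0 a
    simp at this
    rw [← h1, this]
  have h2 := H.one_lt_finrank
  have : Subsingleton A := ⟨fun a b => by rw [this a, this b]⟩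
  rw [Module.finrank_zero_of_subsingleton] at h2
  omega

end Alg


section Rho
open scoped ContDiff

/-- `x_p` as a continuous linear map -/
noncomputable def projL (m p : ℕ) : (Fin (m + 1) → ℝ) →L[ℝ] (Fin (p + 1) → ℝ) :=
  ContinuousLinearMap.pi fun s =>
    if h : (s : ℕ) < m + 1 then ContinuousLinearMap.proj (⟨s, h⟩ : Fin (m + 1)) else 0

lemma projL_apply (m p : ℕ) (x) : projL m p x = projP m p x := by
  ext s
  simp only [projL, projP, ContinuousLinearMap.pi_apply]
  split_ifs <;> rfl

/-- coordinates of `x_q` as a continuous linear form -/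
noncomputable def xqC (m p : ℕ) (s : Fin (m + 1)) : (Fin (m + 1) → ℝ) →L[ℝ] ℝ :=
  if (s : ℕ) ≤ p then 0 else ContinuousLinearMap.proj s

lemma xqC_apply (m p : ℕ) (s) (x) : xqC m p s x = xqpart m p x s := by
  simp only [xqC, xqpart]
  split_ifs <;> rfl

/-- the linear form `h ↦ ⟨x_q, h⟩` -/
noncomputable def innerQ (m p : ℕ) (x : Fin (m + 1) → ℝ) : (Fin (m + 1) → ℝ) →L[ℝ] ℝ :=
  ∑ s, xqpart m p x s • xqC m p s

lemma innerQ_single (m p : ℕ) (x : Fin (m + 1) → ℝ) (s) :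
    innerQ m p x (Pi.single s 1) = xqpart m p x s := by
  simp only [innerQ, sum_apply, smul_apply, xqC_apply, smul_eq_mul]
  rw [Finset.sum_eq_single s]
  · simp only [xqpart]; split_ifs <;> simp
  · intro t _ hts
    simp only [xqpart]; split_ifs <;> simp [hts]
  · simp

lemma rad_sq (m p : ℕ) (x) : rad m p x ^ 2 = ∑ s, xqpart m p x s ^ 2 :=
  Real.sq_sqrt (Finset.sum_nonneg fun _ _ => sq_nonneg _)

lemma rad_nonneg (m p : ℕ) (x) : 0 ≤ rad m p x := Real.sqrt_nonneg _

lemma xq_of_rad (m p : ℕ) (x) (h : rad m p x = 0) (s) : xqpart m p x s = 0 := by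
  have h1 := rad_sq m p x
  rw [h, zero_pow two_ne_zero, eq_comm,
    Finset.sum_eq_zero_iff_of_nonneg (fun _ _ => sq_nonneg _)] at h1
  simpa using h1 s (Finset.mem_univ _)

lemma rad_hasFDerivAt (m p : ℕ) (x) (h : rad m p x ≠ 0) :
    HasFDerivAt (rad m p) ((rad m p x)⁻¹ • innerQ m p x) x := by
  have h1 : HasFDerivAt (fun y => ∑ s, xqpart m p y s ^ 2) ((2:ℝ) • innerQ m p x) x := by
    have : HasFDerivAt (fun y => ∑ s, xqpart m p y s ^ 2)
        (∑ s, (2 * xqpart m p x s) • xqC m p s) x := by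
      refine HasFDerivAt.fun_sum fun s _ => ?_
      have h2 : HasFDerivAt (fun y => xqpart m p y s) (xqC m p s) x := by
        simp only [← xqC_apply]
        exact (xqC m p s).hasFDerivAt
      have := h2.pow 2
      simpa using this
    convert this using 1
    rw [innerQ, Finset.smul_sum]
    simp only [smul_smul]
  have h0 : ∑ s, xqpart m p x s ^ 2 ≠ 0 := by
    rw [← rad_sq]; exact pow_ne_zero _ h
  have h3 := h1.sqrt h0
  refine h3.congr_fderiv ?_
  rw [smul_smul]
  congr 1
  change 1 / (2 * rad m p x) * 2 = _
  field_simp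

/-- the map sending x to the pair (x_p, r) -/
noncomputable def rho (m p : ℕ) (x : Fin (m + 1) → ℝ) : (Fin (p + 1) → ℝ) × ℝ :=
  (projP m p x, rad m p x)

lemma rho_continuous (m p : ℕ) : Continuous (rho m p) := by
  have h1 : Continuous (projP m p) := by
    have := (projL m p).continuous
    simpa only [funext_iff, projL_apply, ← (funext (projL_apply m p) : ⇑(projL m p) = projP m p)]
      using this
  have h2 : Continuous (rad m p) := by
    unfold rad
    refine Real.continuous_sqrt.comp (continuous_finsetSum _ fun s _ => Continuous.pow ?_ 2)
    simp only [← xqC_apply]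
    exact (xqC m p s).continuous
  exact h1.prodMk h2

lemma xqpart_sub (m p : ℕ) (x y) (s) :
    xqpart m p (x - y) s = xqpart m p x s - xqpart m p y s := by
  simp only [← xqC_apply, map_sub]

lemma rad_le (m p : ℕ) (x) : rad m p x ≤ Real.sqrt (m + 1) * ‖x‖ := by
  unfold rad
  apply Real.sqrt_le_iff.mpr
  refine ⟨by positivity, ?_⟩
  rw [mul_pow, Real.sq_sqrt (by positivity)]
  calc ∑ s, xqpart m p x s ^ 2 ≤ ∑ s : Fin (m + 1), ‖x‖ ^ 2 := by
        refine Finset.sum_le_sum fun s _ => ?_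
        simp only [xqpart]
        split_ifs
        · simp
        · rw [← sq_abs]
          exact pow_le_pow_left₀ (abs_nonneg _) (norm_le_pi_norm x s) 2
    _ = _ := by simp

variable {A : Type*} [NormedAddCommGroup A] [NormedSpace ℝ A]

lemma rho_hasFDerivAt {m p : ℕ} {D : Set ((Fin (p + 1) → ℝ) × ℝ)} (hD : IsOpen D)
    (hR : ∀ z ∈ D, reflD p z ∈ D) {E : (Fin (p + 1) → ℝ) × ℝ → A} (hE : SE D E)
    (x) (hx : rho m p x ∈ D) :
    HasFDerivAt (fun x => E (rho m p x))
      ((fderiv ℝ E (rho m p x)).comp ((projL m p).prod 0) +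
        (innerQ m p x).smulRight (T1 p E (rho m p x))) x := by
  have dE : HasFDerivAt E (fderiv ℝ E (rho m p x)) (rho m p x) :=
    (SE.diffAt hD hE.smooth hx).hasFDerivAt
  have dP : HasFDerivAt (projP m p) (projL m p) x := by
    rw [← (funext (projL_apply m p) : ⇑(projL m p) = projP m p)]
    exact (projL m p).hasFDerivAt
  by_cases h0 : rad m p x = 0
  · have hz := hE.pdSr_zero hD hR _ hx h0
    have hi : innerQ m p x = 0 := by
      simp [innerQ, xq_of_rad m p x h0]
    rw [hi]
    refine HasFDerivAt.of_isLittleO ?_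
    have l1 := dE.isLittleO.comp_tendsto ((rho_continuous m p).tendsto x)
    have l2 : ((fun x' => x' - rho m p x) ∘ rho m p) =O[𝓝 x] fun y => y - x := by
      have hP : (fun y => projP m p y - projP m p x) =O[𝓝 x] fun y => y - x := dP.isBigO_sub
      have hr : (fun y => rad m p y - rad m p x) =O[𝓝 x] fun y => y - x := by
        refine Asymptotics.IsBigO.of_bound (Real.sqrt (m + 1)) (Eventually.of_forall fun y => ?_)
        have : rad m p y = rad m p (y - x) := by
          unfold rad
          simp only [xqpart_sub, xq_of_rad m p x h0, sub_zero]
        rw [h0, sub_zero, this, Real.norm_of_nonneg (rad_nonneg _ _ _)]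
        exact rad_le m p _
      exact hP.prod_left hr
    refine (l1.trans_isBigO l2).congr_left fun y => ?_
    simp only [Function.comp]
    congr 1
    have : rho m p y - rho m p x = (projP m p (y - x), 0) + rad m p y • ((0 : Fin (p + 1) → ℝ), (1:ℝ)) := by
      simp only [rho, h0, ← projL_apply, map_sub]
      ext <;> simp
    rw [this, map_add, map_smul]
    unfold pdSr at hz
    rw [hz]
    simp [projL_apply]
  · have h1 := dE.comp x (dP.prodMk (rad_hasFDerivAt m p x h0))
    refine h1.congr_fderiv ?_
    ext h
    have e : T1 p E (rho m p x) = (rad m p x)⁻¹ • fderiv ℝ E (rho m p x) (0, 1) := by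
      exact if_neg h0
    rw [e]
    have : (projL m p h, (rad m p x)⁻¹ * innerQ m p x h) =
      (projL m p h, 0) + ((rad m p x)⁻¹ * innerQ m p x h) • ((0 : Fin (p + 1) → ℝ), (1:ℝ)) := by
      ext <;> simp
    change fderiv ℝ E (rho m p x) (projL m p h, (rad m p x)⁻¹ * innerQ m p x h) =
      fderiv ℝ E (rho m p x) (projL m p h, 0) +
        innerQ m p x h • (rad m p x)⁻¹ • fderiv ℝ E (rho m p x) (0, 1)
    rw [this, map_add, map_smul, smul_smul, mul_comm]

lemma rho_smooth [CompleteSpace A] {m p : ℕ} {D : Set ((Fin (p + 1) → ℝ) × ℝ)} (hD : IsOpen D)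
    (hR : ∀ z ∈ D, reflD p z ∈ D) (n : ℕ) : ∀ {E : (Fin (p + 1) → ℝ) × ℝ → A} (_ : SE D E),
    ContDiffOn ℝ n (fun x => E (rho m p x)) (rho m p ⁻¹' D) := by
  have hO : IsOpen (rho m p ⁻¹' D) := hD.preimage (rho_continuous m p)
  induction n with
  | zero =>
    intro E hE
    exact contDiffOn_zero.mpr
      (hE.smooth.continuousOn.comp (rho_continuous m p).continuousOn fun x hx => hx)
  | succ n ih =>
    intro E hE
    push_cast
    rw [contDiffOn_succ_iff_fderiv_of_isOpen hO]
    refine ⟨fun x hx => (rho_hasFDerivAt hD hR hE x hx).differentiableAt.differentiableWithinAt,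
      by simp, ?_⟩
    rw [contDiffOn_clm_apply]
    intro y
    have h1 := ih (hE.pdx hD hR (projP m p y))
    have h2 := ih (hE.T1 hD hR)
    have h3 : ContDiff ℝ n (fun x => innerQ m p x y) := by
      simp only [innerQ, sum_apply, smul_apply, ← xqC_apply]
      fun_prop
    refine (h1.add (h3.contDiffOn.smul h2)).congr fun x hx => ?_
    rw [(rho_hasFDerivAt hD hR hE x hx).fderiv]
    simp [projL_apply]

/-- the derivative of a stem in the direction of the `s`-th coordinate of `x_p` -/
noncomputable def Pd (m p : ℕ) (s : Fin (m + 1)) (E : (Fin (p + 1) → ℝ) × ℝ → A)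
    (z : (Fin (p + 1) → ℝ) × ℝ) : A := fderiv ℝ E z (projL m p (Pi.single s 1), 0)

lemma projL_single {m p : ℕ} (hp : p ≤ m) (s : Fin (m + 1)) :
    projL m p (Pi.single s 1) = fun j : Fin (p + 1) => if (j : ℕ) = s then 1 else 0 := by
  ext j
  rw [projL_apply]
  simp only [projP]
  rw [dif_pos (by omega), Pi.single_apply]
  simp [Fin.ext_iff]

lemma Pd_gt {m p : ℕ} (hp : p ≤ m) (s : Fin (m + 1)) (hs : p < s)
    (E : (Fin (p + 1) → ℝ) × ℝ → A) (z) : Pd m p s E z = 0 := by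
  unfold Pd
  rw [projL_single hp]
  have : ((fun j : Fin (p + 1) => if (j : ℕ) = s then (1:ℝ) else 0), (0:ℝ)) = 0 := by
    ext j
    · have : (j : ℕ) ≠ s := by omega
      simp [this]
    · rfl
  rw [this, map_zero]

lemma Pd_sum {m p : ℕ} (hp : p ≤ m) (L : ℕ → A →L[ℝ] A)
    (E : (Fin (p + 1) → ℝ) × ℝ → A) (z) :
    ∑ s : Fin (m + 1), L s (Pd m p s E z) = ∑ s : Fin (p + 1), L s (pdSx p s E z) := by
  let g : ℕ → A := fun s =>
    L s (fderiv ℝ E z ((fun j : Fin (p + 1) => if (j : ℕ) = s then (1:ℝ) else 0), (0:ℝ)))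
  have e1 : ∑ s : Fin (m + 1), L s (Pd m p s E z) = ∑ s : Fin (m + 1), g s := by
    refine Finset.sum_congr rfl fun s _ => ?_
    unfold Pd
    rw [projL_single hp]
  have e2 : ∑ s : Fin (p + 1), L s (pdSx p s E z) = ∑ s : Fin (p + 1), g s := by
    refine Finset.sum_congr rfl fun s _ => ?_
    unfold pdSx
    have : (Pi.single s 1 : Fin (p + 1) → ℝ) = fun j : Fin (p + 1) => if (j : ℕ) = s then 1 else 0 := by
      ext j; rw [Pi.single_apply]; simp [Fin.ext_iff]
    rw [this]
  rw [e1, e2, Fin.sum_univ_eq_sum_range, Fin.sum_univ_eq_sum_range]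
  symm
  refine Finset.sum_subset (Finset.range_mono (by omega)) fun s hs hs' => ?_
  simp only [Finset.mem_range] at hs hs'
  have := Pd_gt hp ⟨s, hs⟩ (by simp; omega) E z
  unfold Pd at this
  rw [projL_single hp] at this
  simp only [g]
  simp only at this
  rw [this, map_zero]

lemma pdF_rho {m p : ℕ} {D : Set ((Fin (p + 1) → ℝ) × ℝ)} (hD : IsOpen D)
    (hR : ∀ z ∈ D, reflD p z ∈ D) {E : (Fin (p + 1) → ℝ) × ℝ → A} (hE : SE D E)
    (x) (hx : rho m p x ∈ D) (s) : pdF m s (fun x => E (rho m p x)) x =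
      Pd m p s E (rho m p x) + xqpart m p x s • T1 p E (rho m p x) := by
  unfold pdF
  rw [(rho_hasFDerivAt hD hR hE x hx).fderiv]
  simp [Pd, innerQ_single]

/-- left multiplication by `x_q` -/
noncomputable def xqL (L : ℕ → A →L[ℝ] A) (m p : ℕ) (x : Fin (m + 1) → ℝ) : A →L[ℝ] A :=
  ∑ s : Fin (m + 1), xqpart m p x s • L s

lemma xqL_apply (L : ℕ → A →L[ℝ] A) (m p : ℕ) (x : Fin (m + 1) → ℝ) (a : A) :
    xqL L m p x a = ∑ s : Fin (m + 1), xqpart m p x s • L s a := by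
  simp [xqL, sum_apply]

lemma quad_sum {L Lb : ℕ → A →L[ℝ] A} {m : ℕ} (h : Clf L Lb m) (w : Fin (m + 1) → ℝ)
    (hw : w 0 = 0) (a : A) :
    ∑ s : Fin (m + 1), w s • L s (∑ t : Fin (m + 1), w t • L t a) = -((∑ s, w s ^ 2) • a) := by
  have e1 : ∑ s : Fin (m + 1), w s • L s (∑ t : Fin (m + 1), w t • L t a)
      = ∑ s : Fin (m + 1), ∑ t : Fin (m + 1), (w s * w t) • L s (L t a) := by
    simp only [map_sum, map_smul, Finset.smul_sum, smul_smul]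
  have e2 : ∑ s : Fin (m + 1), ∑ t : Fin (m + 1), (w s * w t) • L s (L t a)
      = ∑ s : Fin (m + 1), ∑ t : Fin (m + 1), (w s * w t) • L t (L s a) := by
    rw [Finset.sum_comm]
    simp only [mul_comm]
  have e3 : (2 : ℝ) • ∑ s : Fin (m + 1), ∑ t : Fin (m + 1), (w s * w t) • L s (L t a)
      = (2 : ℝ) • -((∑ s, w s ^ 2) • a) := by
    rw [two_smul]
    nth_rewrite 2 [e2]
    rw [← Finset.sum_add_distrib, Finset.sum_smul, ← Finset.sum_neg_distrib, Finset.smul_sum]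
    refine Finset.sum_congr rfl fun s _ => ?_
    rw [← Finset.sum_add_distrib]
    rw [Finset.sum_eq_single s]
    · by_cases hs : s = 0
      · subst hs; simp [hw]
      · have : (s : ℕ) ≠ 0 := fun h => hs (Fin.ext h)
        rw [h.sq s (by omega) (by omega)]
        module
    · intro t _ hts
      by_cases hs : s = 0
      · subst hs; simp [hw]
      by_cases ht : t = 0
      · subst ht; simp [hw]
      have hs' : (s : ℕ) ≠ 0 := fun h => hs (Fin.ext h)
      have ht' : (t : ℕ) ≠ 0 := fun h => ht (Fin.ext h)
      rw [h.anti s t (by omega) (by omega) (by omega) (by omega) (fun h => hts (Fin.ext h.symm))]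
      module
    · simp
  rw [e1]
  exact smul_right_injective A (two_ne_zero' ℝ) e3

lemma xqL_xqL {L Lb : ℕ → A →L[ℝ] A} {m p : ℕ} (h : Clf L Lb m) (x) (a : A) :
    xqL L m p x (xqL L m p x a) = -(rad m p x ^ 2 • a) := by
  rw [rad_sq, ← quad_sum h (xqpart m p x) (by simp [xqpart]) a, xqL_apply, xqL_apply]

lemma xqL_Pd {L Lb : ℕ → A →L[ℝ] A} {m p : ℕ} (h : Clf L Lb m) (hp : p ≤ m) (x)
    (s : Fin (m + 1)) (E : (Fin (p + 1) → ℝ) × ℝ → A) (z) :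
    L s (xqL L m p x (Pd m p s E z)) = xqL L m p x (Lb s (Pd m p s E z)) := by
  by_cases hs : p < (s : ℕ)
  · rw [Pd_gt hp s hs]; simp
  · rw [xqL_apply, xqL_apply, map_sum]
    refine Finset.sum_congr rfl fun t _ => ?_
    rw [map_smul]
    by_cases ht : (t : ℕ) ≤ p
    · simp [xqpart, ht]
    · rw [h.comm s t (by omega) (by omega)]

end Rho


section Lap
open scoped ContDiff

variable {A : Type*} [NormedAddCommGroup A] [NormedSpace ℝ A]

/-- the function `E + x_q G` -/
noncomputable def hfun (L : ℕ → A →L[ℝ] A) (m p : ℕ) (E G : (Fin (p + 1) → ℝ) × ℝ → A)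
    (x : Fin (m + 1) → ℝ) : A := E (rho m p x) + xqL L m p x (G (rho m p x))

lemma hfun_smooth [CompleteSpace A] {L : ℕ → A →L[ℝ] A} {m p : ℕ}
    {D : Set ((Fin (p + 1) → ℝ) × ℝ)} (hD : IsOpen D)
    (hR : ∀ z ∈ D, reflD p z ∈ D) {E G : (Fin (p + 1) → ℝ) × ℝ → A} (hE : SE D E) (hG : SE D G)
    (n : ℕ) : ContDiffOn ℝ n (hfun L m p E G) (rho m p ⁻¹' D) := by
  refine (rho_smooth hD hR n hE).add ?_
  simp only [xqL_apply, ← xqC_apply]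
  refine ContDiffOn.sum fun s _ => ?_
  refine ContDiffOn.smul ?_ ?_
  · exact ((xqC m p s).contDiff).contDiffOn
  · exact (L s).contDiff.comp_contDiffOn (rho_smooth hD hR n hG)

lemma pdF_hfun {L : ℕ → A →L[ℝ] A} {m p : ℕ}
    {D : Set ((Fin (p + 1) → ℝ) × ℝ)} (hD : IsOpen D)
    (hR : ∀ z ∈ D, reflD p z ∈ D) {E G : (Fin (p + 1) → ℝ) × ℝ → A} (hE : SE D E) (hG : SE D G)
    (x) (hx : rho m p x ∈ D) (s : Fin (m + 1)) :
    pdF m s (hfun L m p E G) x = pdF m s (fun x => E (rho m p x)) x +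
      xqL L m p x (pdF m s (fun x => G (rho m p x)) x) +
      (if (s : ℕ) ≤ p then 0 else L s (G (rho m p x))) := by
  have dE := (rho_hasFDerivAt hD hR hE x hx).differentiableAt.hasFDerivAt
  have dG := (rho_hasFDerivAt hD hR hG x hx).differentiableAt.hasFDerivAt
  have h1 : HasFDerivAt (fun x => ∑ t : Fin (m + 1), xqC m p t x • L t (G (rho m p x)))
      (∑ t : Fin (m + 1), (xqC m p t x • (L t).comp (fderiv ℝ (fun x => G (rho m p x)) x) +
        (xqC m p t).smulRight (L t (G (rho m p x))))) x := by
    refine HasFDerivAt.fun_sum fun t _ => ?_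
    have g1 : HasFDerivAt (fun x => xqC m p t x) (xqC m p t) x := (xqC m p t).hasFDerivAt
    have g2 : HasFDerivAt (fun x => L t (G (rho m p x)))
        ((L t).comp (fderiv ℝ (fun x => G (rho m p x)) x)) x := (L t).hasFDerivAt.comp x dG
    exact g1.smul g2
  have h3 : hfun L m p E G =
      fun x => E (rho m p x) + ∑ t : Fin (m + 1), xqC m p t x • L t (G (rho m p x)) := by
    ext y
    simp only [hfun, xqL_apply, xqC_apply]
  have h2 := dE.fun_add h1
  rw [← h3] at h2
  unfold pdF
  rw [h2.fderiv, xqL_apply, add_apply, add_assoc]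
  congr 1
  rw [sum_apply]
  simp only [add_apply, Finset.sum_add_distrib]
  congr 1
  · refine Finset.sum_congr rfl fun t _ => ?_
    rw [← xqC_apply]
    rfl
  · rw [Finset.sum_eq_single s]
    · simp only [ContinuousLinearMap.smulRight_apply, xqC_apply, xqpart]
      split_ifs <;> simp
    · intro t _ hts
      simp only [ContinuousLinearMap.smulRight_apply, xqC_apply, xqpart]
      split_ifs <;> simp [hts]
    · simp

lemma count_q {m p : ℕ} (hp : p ≤ m) (a : A) :
    ∑ s : Fin (m + 1), (if (s : ℕ) ≤ p then 0 else -a) = -(((m - p : ℕ) : ℝ) • a) := by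
  rw [Fin.sum_univ_eq_sum_range (fun s => if s ≤ p then 0 else -a)]
  obtain ⟨q, rfl⟩ := Nat.exists_eq_add_of_le hp
  have : p + q + 1 = (p + 1) + q := by ring
  rw [this, Finset.sum_range_add]
  have h1 : ∑ s ∈ Finset.range (p + 1), (if s ≤ p then 0 else -a) = 0 := by
    refine Finset.sum_eq_zero fun s hs => ?_
    rw [if_pos (by simp at hs; omega)]
  have h2 : ∑ s ∈ Finset.range q, (if p + 1 + s ≤ p then 0 else -a) = q • (-a) := by
    rw [Finset.sum_congr rfl (fun s _ => if_neg (by omega)), Finset.sum_const, Finset.card_range]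
  rw [h1, h2]
  simp [Nat.cast_smul_eq_nsmul]

lemma D_hfun {L Lb : ℕ → A →L[ℝ] A} {m p : ℕ} (h : Clf L Lb m) (hp : p ≤ m)
    {D : Set ((Fin (p + 1) → ℝ) × ℝ)} (hD : IsOpen D)
    (hR : ∀ z ∈ D, reflD p z ∈ D) {c : ℝ} {E G : (Fin (p + 1) → ℝ) × ℝ → A}
    (hC : CRc L Lb D c E G) (x) (hx : rho m p x ∈ D) :
    ∑ s : Fin (m + 1), L s (pdF m s (hfun L m p E G) x) =
      (c - ((m - p : ℕ) : ℝ)) • G (rho m p x) := by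
  have e : ∀ s : Fin (m + 1), L s (pdF m s (hfun L m p E G) x) =
      L s (Pd m p s E (rho m p x)) + xqpart m p x s • L s (T1 p E (rho m p x)) +
      xqL L m p x (Lb s (Pd m p s G (rho m p x))) +
      xqpart m p x s • L s (xqL L m p x (T1 p G (rho m p x))) +
      (if (s : ℕ) ≤ p then 0 else - G (rho m p x)) := by
    intro s
    rw [pdF_hfun hD hR hC.seE hC.seG x hx, pdF_rho hD hR hC.seE x hx, pdF_rho hD hR hC.seG x hx]
    rw [map_add, map_add, map_add, map_add, map_add, xqL_Pd h hp, map_smul, map_smul, map_smul]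
    have : L s (if (s : ℕ) ≤ p then 0 else L s (G (rho m p x))) =
        (if (s : ℕ) ≤ p then 0 else - G (rho m p x)) := by
      split_ifs with hs
      · simp
      · rw [h.sq s (by omega) (by omega)]
    rw [this]
    abel
  rw [Finset.sum_congr rfl fun s _ => e s]
  simp only [Finset.sum_add_distrib]
  rw [count_q hp, Pd_sum hp, hC.cr1 _ hx, ← xqL_apply, ← xqL_apply, xqL_xqL h, ← map_sum,
    Pd_sum hp, hC.cr2 _ hx, map_neg]
  have : (rho m p x).2 = rad m p x := rfl
  rw [this]
  module

lemma Db_rho {L Lb : ℕ → A →L[ℝ] A} {m p : ℕ} (h : Clf L Lb m) (hp : p ≤ m)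
    {D : Set ((Fin (p + 1) → ℝ) × ℝ)} (hD : IsOpen D)
    (hR : ∀ z ∈ D, reflD p z ∈ D) {c : ℝ} {E G : (Fin (p + 1) → ℝ) × ℝ → A}
    (hC : CRc L Lb D c E G) (x) (hx : rho m p x ∈ D) :
    ∑ s : Fin (m + 1), Lb s (pdF m s (fun x => G (rho m p x)) x) =
      - hfun L m p (T1 p E) (T1 p G) x := by
  have e : ∀ s : Fin (m + 1), Lb s (pdF m s (fun x => G (rho m p x)) x) =
      Lb s (Pd m p s G (rho m p x)) + -(xqpart m p x s • L s (T1 p G (rho m p x))) := by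
    intro s
    rw [pdF_rho hD hR hC.seG x hx, map_add, map_smul]
    congr 1
    by_cases hs : (s : ℕ) ≤ p
    · simp [xqpart, hs]
    · rw [h.Lbn s (by omega), smul_neg]
  rw [Finset.sum_congr rfl fun s _ => e s, Finset.sum_add_distrib, Pd_sum hp, hC.cr2 _ hx,
    Finset.sum_neg_distrib, ← xqL_apply]
  unfold hfun
  abel

lemma lap_eq {L Lb : ℕ → A →L[ℝ] A} {m : ℕ} (h : Clf L Lb m) {Ω : Set (Fin (m + 1) → ℝ)}
    (hO : IsOpen Ω) {u : (Fin (m + 1) → ℝ) → A} (hu : ContDiffOn ℝ 2 u Ω) (x) (hx : x ∈ Ω) :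
    ∑ s : Fin (m + 1), Lb s (pdF m s (fun y => ∑ t : Fin (m + 1), L t (pdF m t u y)) x) =
      lapF m u x := by
  have hd : DifferentiableAt ℝ (fderiv ℝ u) x :=
    (((hu.contDiffAt (hO.mem_nhds hx)).fderiv_right (m := 1) (by norm_num)).differentiableAt
      (by simp))
  have e : ∀ s t : Fin (m + 1), pdF m s (pdF m t u) x =
      fderiv ℝ (fderiv ℝ u) x (Pi.single s 1) (Pi.single t 1) := by
    intro s t
    unfold pdF
    rw [fderiv_clm_apply hd (differentiableAt_const _)]
    simp
  have hs : IsSymmSndFDerivAt ℝ u x :=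
    (hu.contDiffAt (hO.mem_nhds hx)).isSymmSndFDerivAt (by simp)
  have sy : ∀ s t : Fin (m + 1), pdF m s (pdF m t u) x = pdF m t (pdF m s u) x := by
    intro s t
    rw [e, e]; exact hs.eq _ _
  have e1 : ∀ s : Fin (m + 1), pdF m s (fun y => ∑ t : Fin (m + 1), L t (pdF m t u y)) x =
      ∑ t : Fin (m + 1), L t (pdF m s (pdF m t u) x) := by
    intro s
    have h1 : HasFDerivAt (fun y => ∑ t : Fin (m + 1), L t (pdF m t u y))
        (∑ t : Fin (m + 1), (L t).comp (fderiv ℝ (pdF m t u) x)) x := by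
      refine HasFDerivAt.fun_sum fun t _ => ?_
      have : DifferentiableAt ℝ (pdF m t u) x := hd.clm_apply (differentiableAt_const _)
      exact (L t).hasFDerivAt.comp x this.hasFDerivAt
    change fderiv ℝ _ x _ = _
    rw [h1.fderiv, sum_apply]
    rfl
  simp only [e1, map_sum]
  have e2 : ∑ s : Fin (m + 1), ∑ t : Fin (m + 1), Lb s (L t (pdF m s (pdF m t u) x)) =
      ∑ s : Fin (m + 1), ∑ t : Fin (m + 1), Lb t (L s (pdF m s (pdF m t u) x)) := by
    rw [Finset.sum_comm]
    refine Finset.sum_congr rfl fun s _ => Finset.sum_congr rfl fun t _ => ?_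
    rw [sy]
  apply smul_right_injective A (two_ne_zero' ℝ)
  change (2 : ℝ) • _ = (2 : ℝ) • _
  rw [two_smul]
  nth_rewrite 2 [e2]
  unfold lapF
  rw [← Finset.sum_add_distrib, Finset.smul_sum]
  refine Finset.sum_congr rfl fun s _ => ?_
  rw [← Finset.sum_add_distrib]
  have : ∀ t : Fin (m + 1), Lb s (L t (pdF m s (pdF m t u) x)) + Lb t (L s (pdF m s (pdF m t u) x))
    = if s = t then (2:ℝ) • pdF m s (pdF m t u) x else 0 := by
    intro t
    rw [h.rel s t (by omega) (by omega)]
    simp [Fin.ext_iff]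
  rw [Finset.sum_congr rfl fun t _ => this t]
  simp

lemma pdF_congr {m : ℕ} {Ω : Set (Fin (m + 1) → ℝ)} (hO : IsOpen Ω)
    {u w : (Fin (m + 1) → ℝ) → A} (h : ∀ x ∈ Ω, u x = w x) (s) : ∀ x ∈ Ω, pdF m s u x = pdF m s w x := by
  intro x hx
  have : u =ᶠ[𝓝 x] w := by
    filter_upwards [hO.mem_nhds hx] with y hy
    exact h y hy
  unfold pdF
  rw [this.fderiv_eq]

lemma lapF_congr {m : ℕ} {Ω : Set (Fin (m + 1) → ℝ)} (hO : IsOpen Ω)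
    {u w : (Fin (m + 1) → ℝ) → A} (h : ∀ x ∈ Ω, u x = w x) : ∀ x ∈ Ω, lapF m u x = lapF m w x := by
  intro x hx
  unfold lapF
  exact Finset.sum_congr rfl fun s _ => pdF_congr hO (pdF_congr hO h s) s x hx

lemma pdF_smul {m : ℕ} (c : ℝ) (u : (Fin (m + 1) → ℝ) → A) (s) :
    pdF m s (fun x => c • u x) = fun x => c • pdF m s u x := by
  ext x
  unfold pdF
  have : fderiv ℝ (fun x => c • u x) = c • fderiv ℝ u := fderiv_const_smul_field c
  rw [this]
  rfl

lemma lapF_smul {m : ℕ} (c : ℝ) (u : (Fin (m + 1) → ℝ) → A) (x) :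
    lapF m (fun x => c • u x) x = c • lapF m u x := by
  unfold lapF
  rw [Finset.smul_sum]
  refine Finset.sum_congr rfl fun s _ => ?_
  rw [pdF_smul, pdF_smul]

lemma lap_hfun [CompleteSpace A] {L Lb : ℕ → A →L[ℝ] A} {m p : ℕ} (h : Clf L Lb m) (hp : p ≤ m)
    {D : Set ((Fin (p + 1) → ℝ) × ℝ)} (hD : IsOpen D)
    (hR : ∀ z ∈ D, reflD p z ∈ D) {c : ℝ} {E G : (Fin (p + 1) → ℝ) × ℝ → A}
    (hC : CRc L Lb D c E G) (x) (hx : rho m p x ∈ D) :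
    lapF m (hfun L m p E G) x =
      (((m - p : ℕ) : ℝ) - c) • hfun L m p (T1 p E) (T1 p G) x := by
  have hO : IsOpen (rho m p ⁻¹' D) := hD.preimage (rho_continuous m p)
  rw [← lap_eq h hO (hfun_smooth hD hR hC.seE hC.seG 2) x hx]
  have e : ∀ s, pdF m s (fun y => ∑ t : Fin (m + 1), L t (pdF m t (hfun L m p E G) y)) x =
      (c - ((m - p : ℕ) : ℝ)) • pdF m s (fun x => G (rho m p x)) x := by
    intro s
    rw [pdF_congr hO (D_hfun h hp hD hR hC) s x hx, pdF_smul]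
  simp only [e, map_smul]
  rw [← Finset.smul_sum, Db_rho h hp hD hR hC x hx]
  module

lemma lapIter_hfun [CompleteSpace A] {L Lb : ℕ → A →L[ℝ] A} {m p : ℕ} (h : Clf L Lb m) (hp : p ≤ m)
    {D : Set ((Fin (p + 1) → ℝ) × ℝ)} (hD : IsOpen D)
    (hR : ∀ z ∈ D, reflD p z ∈ D) {E G : (Fin (p + 1) → ℝ) × ℝ → A}
    (hC : CRc L Lb D 1 E G) {f : (Fin (m + 1) → ℝ) → A}
    (hf : ∀ x, rho m p x ∈ D → f x = hfun L m p E G x) (k : ℕ) :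
    ∀ x, rho m p x ∈ D → lapIterF m k f x =
      cq (m - p) k • hfun L m p ((T1 p)^[k] E) ((T1 p)^[k] G) x := by
  have hO : IsOpen (rho m p ⁻¹' D) := hD.preimage (rho_continuous m p)
  induction k with
  | zero => intro x hx; simpa [cq, lapIterF] using hf x hx
  | succ k ih =>
    intro x hx
    have e : lapIterF m (k + 1) f = lapF m (lapIterF m k f) := by
      unfold lapIterF
      rw [Function.iterate_succ_apply']
    rw [e, lapF_congr hO ih x hx, lapF_smul, lap_hfun h hp hD hR (hC.iter hD hR k) x hx,
      Function.iterate_succ_apply', Function.iterate_succ_apply', smul_smul]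
    congr 1
    unfold cq
    rw [Finset.prod_range_succ]
    ring

lemma cq_dfac (k : ℕ) : cq (2 * k + 1) k = (dfac (2 * k) : ℝ) := by
  induction k with
  | zero => simp [cq, dfac]
  | succ k ih =>
    have e : dfac (2 * (k + 1)) = (2 * k + 2) * dfac (2 * k) := rfl
    rw [e]
    push_cast
    rw [← ih]
    unfold cq
    rw [Finset.prod_range_succ', mul_comm]
    push_cast
    congr 1
    · ring
    · refine Finset.prod_congr rfl fun i _ => ?_
      ring

end Lap


section Omega

lemma proj_pt {m p : ℕ} (hp : p ≤ m) (w : Fin (m + 1) → ℝ) (hw : ∀ s : Fin (m + 1), (s : ℕ) ≤ p → w s = 0)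
    (y : Fin (p + 1) → ℝ) (r : ℝ) : projP m p (pt m p w y r) = y := by
  ext s
  have h1 : (s : ℕ) < m + 1 := by omega
  simp only [projP, pt, injP, dif_pos h1, Pi.add_apply, Pi.smul_apply]
  rw [dif_pos s.2, hw _ (by simp; omega)]
  simp

lemma xq_pt {m p : ℕ} (w : Fin (m + 1) → ℝ) (hw : ∀ s : Fin (m + 1), (s : ℕ) ≤ p → w s = 0)
    (y : Fin (p + 1) → ℝ) (r : ℝ) (s) : xqpart m p (pt m p w y r) s = r * w s := by
  simp only [xqpart, pt, injP, Pi.add_apply, Pi.smul_apply]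
  by_cases h1 : (s : ℕ) ≤ p
  · rw [if_pos h1, hw s h1]; simp
  · rw [if_neg h1, dif_neg (by omega)]; simp

lemma pt_self {m p : ℕ} (x : Fin (m + 1) → ℝ) (w : Fin (m + 1) → ℝ)
    (h : ∀ s, rad m p x * w s = xqpart m p x s) : x = pt m p w (projP m p x) (rad m p x) := by
  ext s
  simp only [pt, injP, Pi.add_apply, Pi.smul_apply, smul_eq_mul, h, xqpart, projP]
  by_cases h1 : (s : ℕ) ≤ p
  · rw [if_pos h1, dif_pos (by omega), dif_pos s.2]; simp
  · rw [if_neg h1, dif_neg (by omega)]; simp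

variable {A : Type*} [NormedAddCommGroup A] [NormedSpace ℝ A] [Mul A] [One A]

lemma emb_sq {conj : A → A} (H : IsAltStarAlg A conj) {v : ℕ → A} {m : ℕ}
    (hv : IsHypBasis A conj v m) (w : Fin (m + 1) → ℝ) (hw : w 0 = 0) :
    emb v m w * emb v m w = -((∑ s, w s ^ 2) • (1 : A)) := by
  rw [← quad_sum (alg_clf H hv) w hw 1, emb_mul H]
  refine Finset.sum_congr rfl fun s _ => ?_
  congr 2
  rw [← emb_mul H, H.mul_one']

lemma mem_Sph {conj : A → A} (H : IsAltStarAlg A conj) {v : ℕ → A} {m p : ℕ}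
    (hv : IsHypBasis A conj v m) (w : Fin (m + 1) → ℝ)
    (hw : ∀ s : Fin (m + 1), (s : ℕ) ≤ p → w s = 0) :
    w ∈ Sph v m p ↔ ∑ s, w s ^ 2 = 1 := by
  unfold Sph
  rw [Set.mem_ofPred_eq, emb_sq H hv w (hw 0 (by simp)), neg_inj]
  constructor
  · rintro ⟨_, h⟩
    by_contra hne
    have : ((∑ s, w s ^ 2) - 1) • (1 : A) = 0 := by rw [sub_smul, h, one_smul, sub_self]
    rcases smul_eq_zero.mp this with h1 | h1
    · exact hne (by linarith)
    · exact alg_one_ne_zero H h1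
  · intro h
    exact ⟨hw, by rw [h, one_smul]⟩

lemma rho_of_mem {conj : A → A} (H : IsAltStarAlg A conj) {v : ℕ → A} {m p : ℕ}
    (hv : IsHypBasis A conj v m) (hp : p < m) {D : Set ((Fin (p + 1) → ℝ) × ℝ)}
    (hR : ∀ z ∈ D, reflD p z ∈ D) (x) (hx : x ∈ OmegaD v m p D) : rho m p x ∈ D := by
  obtain ⟨w, hw, z, hz, rfl⟩ := hx
  have h1 := (mem_Sph H hv w hw.1).mp hw
  have h2 : rad m p (pt m p w z.1 z.2) = |z.2| := by
    unfold rad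
    simp only [xq_pt w hw.1, mul_pow]
    rw [← Finset.mul_sum, h1, mul_one, Real.sqrt_sq_eq_abs]
  unfold rho
  rw [h2, proj_pt hp.le w hw.1]
  rcases abs_choice z.2 with h | h
  · rw [h]; exact hz
  · rw [h]; exact hR z hz

lemma exists_w {conj : A → A} (H : IsAltStarAlg A conj) {v : ℕ → A} {m p : ℕ}
    (hv : IsHypBasis A conj v m) (hp : p < m) (x : Fin (m + 1) → ℝ) :
    ∃ w ∈ Sph v m p, ∀ s, rad m p x * w s = xqpart m p x s := by
  by_cases h0 : rad m p x = 0
  · refine ⟨Pi.single (Fin.last m) 1, ?_, fun s => by rw [h0, xq_of_rad m p x h0, zero_mul]⟩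
    rw [mem_Sph H hv]
    · rw [Finset.sum_eq_single (Fin.last m)]
      · simp
      · intro t _ ht; simp [ht]
      · simp
    · intro s hs
      have : s ≠ Fin.last m := by
        intro h; subst h; simp at hs; omega
      simp [this]
  · refine ⟨normq m p x, ?_, fun s => ?_⟩
    · rw [mem_Sph H hv]
      · simp only [normq, Pi.smul_apply, smul_eq_mul, mul_pow]
        rw [← Finset.mul_sum, ← rad_sq]
        field_simp
      · intro s hs; simp [normq, xqpart, hs]
    · simp only [normq, Pi.smul_apply, smul_eq_mul]
      field_simp

lemma mem_of_rho {conj : A → A} (H : IsAltStarAlg A conj) {v : ℕ → A} {m p : ℕ}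
    (hv : IsHypBasis A conj v m) (hp : p < m) {D : Set ((Fin (p + 1) → ℝ) × ℝ)}
    (x) (hx : rho m p x ∈ D) : x ∈ OmegaD v m p D := by
  obtain ⟨w, hw, h⟩ := exists_w (p := p) H hv hp x
  exact ⟨w, hw, rho m p x, hx, pt_self x w h⟩

lemma normq_rad (m p : ℕ) (x) (s) : rad m p x * normq m p x s = xqpart m p x s := by
  by_cases h0 : rad m p x = 0
  · rw [h0, xq_of_rad m p x h0, zero_mul]
  · simp only [normq, Pi.smul_apply, smul_eq_mul]
    field_simp

lemma emb_xqL {conj : A → A} (H : IsAltStarAlg A conj) (v : ℕ → A) (m p : ℕ) (x)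
    (w : Fin (m + 1) → ℝ) (h : ∀ s, rad m p x * w s = xqpart m p x s) (a : A) :
    emb v m w * (rad m p x • a) = xqL (fun s => lmul H (v s)) m p x a := by
  rw [emb_mul H, xqL_apply]
  refine Finset.sum_congr rfl fun s _ => ?_
  rw [map_smul, smul_smul, ← h s, mul_comm]

end Omega


/-- **Fueter-Sce theorem.** For odd `q` and `f = F₁ + ωF₂ ∈ GSR(Ω_D)`, the function
`Δ_x^{(q-1)/2} f` is left monogenic in `Ω_D` and
`Δ_x^{(q-1)/2} f = (q-1)!! (A + ω B)` with
`A = ((1/r)∂_r)^{(q-1)/2} F₁`, `B = (∂_r ∘ (1/r))^{(q-1)/2} F₂`. -/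
theorem fueter_sce
    {A : Type*} [NormedAddCommGroup A] [NormedSpace ℝ A] [Mul A] [One A]
    (conj : A → A) (H : IsAltStarAlg A conj)
    (v : ℕ → A) (m p : ℕ) (hv : IsHypBasis A conj v m) (hp : p < m)
    (hq : Odd (m - p))
    (D : Set ((Fin (p + 1) → ℝ) × ℝ)) (hD : IsOpen D)
    (hDrefl : ∀ z ∈ D, reflD p z ∈ D)
    (F₁ F₂ : (Fin (p + 1) → ℝ) × ℝ → A) (hstem : IsStem p D F₁ F₂)
    (hF₁ : ContDiffOn ℝ 1 F₁ D) (hF₂ : ContDiffOn ℝ 1 F₂ D)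
    (f : (Fin (m + 1) → ℝ) → A) (hind : Induced v m p D F₁ F₂ f)
    (hCR : StemCR v p D F₁ F₂) :
    Monogenic v m (lapIterF m ((m - p - 1) / 2) f) (OmegaD v m p D) ∧
    (∀ x ∈ OmegaD v m p D,
      lapIterF m ((m - p - 1) / 2) f x =
        ((dfac (m - p - 1) : ℝ)) •
          (((T1 p)^[(m - p - 1) / 2] F₁) (projP m p x, rad m p x) +
            emb v m (normq m p x) *
              ((T2 p)^[(m - p - 1) / 2] F₂) (projP m p x, rad m p x))) := by
  have hfd : FiniteDimensional ℝ A := H.finDim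
  have hcs : CompleteSpace A := FiniteDimensional.complete ℝ A
  set L : ℕ → A →L[ℝ] A := fun s => lmul H (v s) with hL
  set Lb : ℕ → A →L[ℝ] A := fun s => if s = 0 then ContinuousLinearMap.id ℝ A
      else - lmul H (v s) with hLb
  have hclf : Clf L Lb m := alg_clf H hv
  have c1 : ∀ z ∈ D, ∑ s : Fin (p + 1), L s (pdSx p s F₁ z) = pdSr p F₂ z := by
    intro z hz
    exact sub_eq_zero.mp (hCR z hz).1
  have c2 : ∀ z ∈ D, ∑ s : Fin (p + 1), Lb s (pdSx p s F₂ z) = - pdSr p F₁ z := by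
    intro z hz
    rw [← eq_neg_of_add_eq_zero_left (hCR z hz).2]
    unfold DbaropSx
    rw [Fin.sum_univ_succ, Fin.sum_univ_succ, sub_eq_add_neg]
    refine congrArg₂ (· + ·) ?_ ?_
    · simp only [hLb]
      rfl
    · rw [if_neg (by simp), zero_add, ← Finset.sum_neg_distrib]
      refine Finset.sum_congr rfl fun s _ => ?_
      rw [if_pos (by simp), hclf.Lbn _ (by simp)]
      rfl
  obtain ⟨G, hC, hFG⟩ := base_pair hclf hp.le D hD hDrefl F₁ F₂ hstem hF₁ hF₂ c1 c2
  have hf : ∀ x, rho m p x ∈ D → f x = hfun L m p F₁ G x := by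
    intro x hx
    obtain ⟨w, hw, h⟩ := exists_w (p := p) H hv hp x
    have h1 := hind w hw _ hx
    have h2 : pt m p w (rho m p x).1 (rho m p x).2 = x := (pt_self x w h).symm
    rw [h2, hFG _ hx] at h1
    rw [h1]
    unfold hfun
    congr 1
    exact emb_xqL H v m p x w h _
  obtain ⟨k, hk⟩ := hq
  have hk2 : (m - p - 1) / 2 = k := by omega
  have hk3 : m - p - 1 = 2 * k := by omega
  rw [hk2, hk3]
  have hlap := lapIter_hfun hclf hp.le hD hDrefl hC hf k
  rw [hk, cq_dfac] at hlap
  have hCk := hC.iter hD hDrefl k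
  have hO : IsOpen (rho m p ⁻¹' D) := hD.preimage (rho_continuous m p)
  refine ⟨⟨?_, ?_⟩, ?_⟩
  · have h1 := hfun_smooth (L := L) (m := m) hD hDrefl hCk.seE hCk.seG 1
    have h2 : ContDiffOn ℝ 1 (lapIterF m k f) (rho m p ⁻¹' D) :=
      (contDiffOn_const.smul h1).congr hlap
    exact h2.mono fun x hx => rho_of_mem H hv hp hDrefl x hx
  · intro x hx
    have hx' := rho_of_mem H hv hp hDrefl x hx
    have h1 : Dop v m 0 m (lapIterF m k f) x =
        ∑ s : Fin (m + 1), L s (pdF m s (lapIterF m k f) x) := by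
      unfold Dop
      refine Finset.sum_congr rfl fun s _ => ?_
      rw [if_pos ⟨by simp, by omega⟩]
      rfl
    rw [h1]
    have h2 : ∀ s : Fin (m + 1), L s (pdF m s (lapIterF m k f) x) = (dfac (2 * k) : ℝ) •
        L s (pdF m s (hfun L m p ((T1 p)^[k] F₁) ((T1 p)^[k] G)) x) := by
      intro s
      rw [pdF_congr hO hlap s x hx', pdF_smul, map_smul]
    rw [Finset.sum_congr rfl fun s _ => h2 s, ← Finset.smul_sum, D_hfun hclf hp.le hD hDrefl hCk x hx',
      hk]
    push_cast
    have h3 : (1 + 2 * (k : ℝ) - (2 * (k : ℝ) + 1)) = 0 := by ring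
    rw [h3, zero_smul, smul_zero]
  · intro x hx
    have hx' := rho_of_mem H hv hp hDrefl x hx
    rw [hlap x hx']
    have h1 := (T2_iter hD hDrefl hC.seG hFG k).2 _ hx'
    congr 1
    unfold hfun
    congr 1
    change _ = emb v m (normq m p x) * (T2 p)^[k] F₂ (rho m p x)
    rw [h1]
    exact (emb_xqL H v m p x _ (normq_rad m p x) _).symm

end GPSM
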